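/- arXiv:2006.01909 — 3 statements merged into one kernel-verified Lean document; each statement's English description precedes it below -/
import Mathlib

section
/- Let ζ : [0,∞) → ℝ be a solution of Cauchy's functional equation. The facet vector fv_ζ is a valuation on polytopes: fv_ζ(P∪Q) + fv_ζ(P∩Q) = fv_ζ(P) + fv_ζ(Q) for all convex polytopes P, Q in ℝⁿ with P ∪ Q convex. -/
open scoped RealInnerProductSpace

noncomputable section

/-- Euclidean n-space. -/
abbrev E (n : ℕ) := EuclideanSpace ℝ (Fin n)

/-- A (convex) polytope: convex hull of a nonempty finite set. -/
def IsPolytope {n : ℕ} (P : Set (E n)) : Prop :=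
  ∃ S : Finset (E n), S.Nonempty ∧ P = convexHull ℝ (S : Set (E n))

/-- Support function. -/
def suppFn {n : ℕ} (P : Set (E n)) (u : E n) : ℝ :=
  sSup ((fun x => ⟪x, u⟫) '' P)

/-- The face of `P` in direction `u`. -/
def face {n : ℕ} (P : Set (E n)) (u : E n) : Set (E n) :=
  {x ∈ P | ⟪x, u⟫ = suppFn P u}

/-- Dimension of a set: rank of the direction of its affine span. -/
def polyDim {n : ℕ} (P : Set (E n)) : ℕ :=
  Module.finrank ℝ (affineSpan ℝ P).direction

/-- The set of outer unit facet normals of `P`. -/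
def normals {n : ℕ} (P : Set (E n)) : Set (E n) :=
  {u | ‖u‖ = 1 ∧ polyDim (face P u) = n - 1}

/-- `a_P(u)`: the (n-1)-dimensional Hausdorff measure of the facet `F(P,u)`. -/
def facetArea {n : ℕ} (P : Set (E n)) (u : E n) : ℝ :=
  (MeasureTheory.Measure.hausdorffMeasure ((n : ℝ) - 1) (face P u)).toReal

/-- `V(P,u)`: volume of the cone `conv{0, F(P,u)}`. -/
def coneVol {n : ℕ} (P : Set (E n)) (u : E n) : ℝ :=
  (MeasureTheory.volume (convexHull ℝ ({0} ∪ face P u))).toReal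

/-- Facet normals whose facet does not contain the origin in its affine hull. -/
def goodNormals {n : ℕ} (P : Set (E n)) : Set (E n) :=
  {u ∈ normals P | (0 : E n) ∉ affineSpan ℝ (face P u)}

/-- The facet vector `fv_ζ`. -/
def fv {n : ℕ} (ζ : ℝ → ℝ) (P : Set (E n)) : E n :=
  ∑ᶠ u ∈ goodNormals P, (ζ (coneVol P u) / suppFn P u) • u

/-- The linear action of a matrix on Euclidean space. -/
def act {n : ℕ} (M : Matrix (Fin n) (Fin n) ℝ) : E n →ₗ[ℝ] E n :=
  Matrix.toEuclideanLin M

/-- Inverse transpose of a matrix. -/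
def invT {n : ℕ} (M : Matrix (Fin n) (Fin n) ℝ) : Matrix (Fin n) (Fin n) ℝ :=
  (M⁻¹).transpose

/-- The `k`-dimensional standard simplex `T^k = conv{0, e₁, …, e_k}` in `ℝⁿ`. -/
def Tk (n k : ℕ) : Set (E n) :=
  convexHull ℝ ({0} ∪ (fun i : Fin n => EuclideanSpace.single i (1 : ℝ)) '' {i | (i : ℕ) < k})

theorem suppFn_spec {n : ℕ} {P : Set (E n)} (hc : IsCompact P) (hne : P.Nonempty) (u : E n) :
    (∃ x ∈ P, ⟪x, u⟫ = suppFn P u) ∧ ∀ y ∈ P, ⟪y, u⟫ ≤ suppFn P u := by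
  have hcont : ContinuousOn (fun x : E n => ⟪x, u⟫) P := by fun_prop
  have hc' := hc.image_of_continuousOn hcont
  have h := hc'.isGreatest_sSup (hne.image _)
  refine ⟨?_, fun y hy => h.2 ⟨y, hy, rfl⟩⟩
  obtain ⟨x, hx, hxe⟩ := h.1
  exact ⟨x, hx, hxe⟩

theorem suppFn_eq {n : ℕ} {P : Set (E n)} {u : E n} {c : ℝ} (h1 : ∃ x ∈ P, ⟪x, u⟫ = c)
    (h2 : ∀ y ∈ P, ⟪y, u⟫ ≤ c) : suppFn P u = c := by
  apply IsGreatest.csSup_eq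
  refine ⟨?_, ?_⟩
  · obtain ⟨x, hx, hxe⟩ := h1
    exact ⟨x, hx, hxe⟩
  · rintro _ ⟨y, hy, rfl⟩
    exact h2 y hy

theorem face_convex {n : ℕ} {P : Set (E n)} (hP : Convex ℝ P) (u : E n) :
    Convex ℝ (face P u) := by
  intro x hx y hy a b ha hb hab
  refine ⟨hP hx.1 hy.1 ha hb hab, ?_⟩
  rw [inner_add_left, inner_smul_left, inner_smul_left, hx.2, hy.2]
  simp only [conj_trivial]
  rw [← add_mul, hab, one_mul]

theorem face_compact {n : ℕ} {P : Set (E n)} (hP : IsCompact P) (u : E n) :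
    IsCompact (face P u) := by
  have : face P u = P ∩ {x | ⟪x, u⟫ = suppFn P u} := rfl
  rw [this]
  exact hP.inter_right (isClosed_eq (by fun_prop) continuous_const)

theorem span_face_le {n : ℕ} {P : Set (E n)} {u x : E n}
    (hx : x ∈ affineSpan ℝ (face P u)) : ⟪x, u⟫ = suppFn P u := by
  refine affineSpan_induction (p := fun x => ⟪x, u⟫ = suppFn P u) hx (fun x hx => hx.2) ?_
  intro c a b d ha hb hd
  simp only [vsub_eq_sub, vadd_eq_add, inner_add_left, inner_smul_left, inner_sub_left, ha, hb, hd]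
  simp

theorem dir_face_le {n : ℕ} {P : Set (E n)} {u : E n} :
    (affineSpan ℝ (face P u)).direction ≤ (ℝ ∙ u)ᗮ := by
  rw [direction_affineSpan, vectorSpan_def, Submodule.span_le]
  rintro _ ⟨a, ha, b, hb, rfl⟩
  simp only [SetLike.mem_coe, Submodule.mem_orthogonal_singleton_iff_inner_left, vsub_eq_sub,
    inner_sub_left, ha.2, hb.2, sub_self]

theorem finrank_orth {n : ℕ} {u : E n} (hu : ‖u‖ = 1) :
    Module.finrank ℝ (ℝ ∙ u)ᗮ + 1 = n := by
  have h0 : u ≠ 0 := by rintro rfl; simp at hu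
  have h1 := Submodule.finrank_add_finrank_orthogonal (ℝ ∙ u)
  rw [finrank_span_singleton h0, finrank_euclideanSpace_fin] at h1
  omega

theorem coneVol_zero {n : ℕ} {P : Set (E n)} {u : E n} (hu : ‖u‖ = 1)
    (hne : (face P u).Nonempty) (hd : polyDim (face P u) ≠ n - 1) : coneVol P u = 0 := by
  obtain ⟨x0, hx0⟩ := hne
  set W := (affineSpan ℝ (face P u)).direction with hW
  have h1 : Module.finrank ℝ W ≤ Module.finrank ℝ (ℝ ∙ u)ᗮ := Submodule.finrank_mono dir_face_le
  have h2 := finrank_orth hu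
  have h3 : Module.finrank ℝ W ≠ n - 1 := hd
  have hs1 : Module.finrank ℝ (ℝ ∙ x0) ≤ 1 := by
    by_cases hx : x0 = 0
    · rw [hx, Submodule.span_zero_singleton, finrank_bot]; exact Nat.zero_le 1
    · exact (finrank_span_singleton hx).le
  have h4 : Module.finrank ℝ ((ℝ ∙ x0) ⊔ W : Submodule ℝ (E n)) ≤ 1 + Module.finrank ℝ W :=
    (Submodule.finrank_add_le_finrank_add_finrank _ _).trans
      (Nat.add_le_add_right hs1 _)
  have h5 : ((ℝ ∙ x0) ⊔ W : Submodule ℝ (E n)) ≠ ⊤ := by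
    intro h
    rw [h, finrank_top, finrank_euclideanSpace_fin] at h4
    omega
  have hsub : convexHull ℝ ({0} ∪ face P u) ⊆ (((ℝ ∙ x0) ⊔ W : Submodule ℝ (E n)) : Set (E n)) := by
    refine convexHull_min ?_ (Submodule.convex _)
    rintro y (hy | hy)
    · rw [Set.mem_singleton_iff] at hy; subst hy; exact Submodule.zero_mem _
    · have : y = x0 + (y - x0) := by abel
      rw [this]
      refine Submodule.add_mem_sup (Submodule.mem_span_singleton_self x0) ?_
      exact AffineSubspace.vsub_mem_direction (subset_affineSpan ℝ _ hy) (subset_affineSpan ℝ _ hx0)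
  have := MeasureTheory.measure_mono_null hsub
    (MeasureTheory.Measure.addHaar_submodule (MeasureTheory.volume : MeasureTheory.Measure (E n)) _ h5)
  rw [coneVol, this]; rfl

open Classical in
/-- The contribution of a direction `u`. -/
def fvTerm {n : ℕ} (ζ : ℝ → ℝ) (P : Set (E n)) (u : E n) : E n :=
  if ‖u‖ = 1 then (ζ (coneVol P u) / suppFn P u) • u else 0

theorem face_nonempty {n : ℕ} {P : Set (E n)} (hc : IsCompact P) (hne : P.Nonempty) (u : E n) :
    (face P u).Nonempty := by
  obtain ⟨x, hx, h⟩ := (suppFn_spec hc hne u).1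
  exact ⟨x, hx, h⟩

theorem fvTerm_eq_indicator {n : ℕ} {ζ : ℝ → ℝ} (h0 : ζ 0 = 0) {P : Set (E n)}
    (hc : IsCompact P) (hne : P.Nonempty) :
    (goodNormals P).indicator (fun u => (ζ (coneVol P u) / suppFn P u) • u) = fvTerm ζ P := by
  funext u
  by_cases hg : u ∈ goodNormals P
  · rw [Set.indicator_of_mem hg, fvTerm, if_pos hg.1.1]
  · rw [Set.indicator_of_notMem hg, fvTerm]
    split_ifs with hu
    · by_cases hd : polyDim (face P u) = n - 1
      · have : (0 : E n) ∈ affineSpan ℝ (face P u) := by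
          by_contra h; exact hg ⟨⟨hu, hd⟩, h⟩
        have := span_face_le this
        rw [inner_zero_left] at this
        rw [← this]; simp
      · rw [coneVol_zero hu (face_nonempty hc hne u) hd, h0]; simp
    · rfl

theorem fv_eq {n : ℕ} {ζ : ℝ → ℝ} (h0 : ζ 0 = 0) {P : Set (E n)}
    (hc : IsCompact P) (hne : P.Nonempty) : fv ζ P = ∑ᶠ u, fvTerm ζ P u := by
  rw [fv, finsum_mem_def, fvTerm_eq_indicator h0 hc hne]

theorem face_hull {n : ℕ} (S : Finset (E n)) (hS : S.Nonempty) (u : E n) :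
    face (convexHull ℝ (S : Set (E n))) u ⊆
      convexHull ℝ ((S : Set (E n)) ∩ face (convexHull ℝ (S : Set (E n))) u) := by
  classical
  set h := suppFn (convexHull ℝ (S : Set (E n))) u with hh
  have hb := (suppFn_spec (S.finite_toSet.isCompact_convexHull ℝ) ((Finset.coe_nonempty.2 hS).convexHull) u).2
  rintro x ⟨hx, hxe⟩
  obtain ⟨w, hw0, hw1, hwx⟩ := Finset.mem_convexHull'.1 hx
  have hz : ∑ y ∈ S, w y * (h - ⟪y, u⟫) = 0 := by
    have : ⟪x, u⟫ = ∑ y ∈ S, w y * ⟪y, u⟫ := by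
      rw [← hwx, sum_inner]; simp [inner_smul_left]
    simp only [mul_sub, Finset.sum_sub_distrib, ← Finset.sum_mul, hw1, one_mul, ← this]
    rw [hxe]; simp [hh]
  have hz' := (Finset.sum_eq_zero_iff_of_nonneg (fun y hy => mul_nonneg (hw0 y hy)
    (sub_nonneg.2 (hb y (subset_convexHull ℝ _ hy))))).1 hz
  have key : ∀ y ∈ S, w y ≠ 0 → y ∈ (S : Set (E n)) ∩ face (convexHull ℝ (S : Set (E n))) u := by
    intro y hy hwy
    have := (mul_eq_zero.1 (hz' y hy)).resolve_left hwy
    exact ⟨hy, subset_convexHull ℝ _ hy, by linarith⟩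
  have e1 : ∑ y ∈ S with w y ≠ 0, w y = 1 := by rw [Finset.sum_filter_ne_zero, hw1]
  have e2 : ∑ y ∈ S with w y ≠ 0, w y • y = x := by
    rw [← hwx]
    apply Finset.sum_filter_of_ne
    intro y _ h hw
    exact h (by rw [hw, zero_smul])
  rw [← e2]
  refine (convex_convexHull ℝ _).sum_mem (fun y hy => hw0 y (Finset.mem_filter.1 hy).1) e1 ?_
  intro y hy
  exact subset_convexHull ℝ _ (key y (Finset.mem_filter.1 hy).1 (Finset.mem_filter.1 hy).2)

theorem normals_finite {n : ℕ} (S : Finset (E n)) (hS : S.Nonempty) :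
    (normals (convexHull ℝ (S : Set (E n)))).Finite := by
  set P := convexHull ℝ (S : Set (E n)) with hP
  refine Set.Finite.of_finite_fibers (fun u => (S : Set (E n)) ∩ face P u) ?_ ?_
  · refine S.finite_toSet.finite_subsets.subset ?_
    rintro _ ⟨u, _, rfl⟩
    exact Set.inter_subset_left
  · rintro T ⟨v, hv, hvT⟩
    refine (Set.toFinite {v, -v}).subset ?_
    rintro u ⟨hu, huT⟩
    have hdir : ∀ w : E n, (affineSpan ℝ (face P w)) = affineSpan ℝ ((S : Set (E n)) ∩ face P w) := by
      intro w
      apply le_antisymm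
      · rw [← affineSpan_convexHull ((S : Set (E n)) ∩ face P w)]
        exact affineSpan_mono ℝ (face_hull S hS w)
      · exact affineSpan_mono ℝ Set.inter_subset_right
    have he : ∀ w : E n, w ∈ normals P → (affineSpan ℝ (face P w)).direction = (ℝ ∙ w)ᗮ := by
      intro w hw
      refine Submodule.eq_of_le_of_finrank_eq dir_face_le ?_
      have h1 := finrank_orth hw.1
      have h2 : Module.finrank ℝ (affineSpan ℝ (face P w)).direction = n - 1 := hw.2
      omega
    have h3 : (ℝ ∙ u)ᗮ = (ℝ ∙ v)ᗮ := by
      have h4 : (S : Set (E n)) ∩ face P u = (S : Set (E n)) ∩ face P v := huT.trans hvT.symm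
      rw [← he u hu, ← he v hv, hdir u, hdir v, h4]
    have h5 : (ℝ ∙ u) = (ℝ ∙ v) := by
      rw [← Submodule.orthogonal_orthogonal (ℝ ∙ u), h3, Submodule.orthogonal_orthogonal]
    have h6 : u ∈ (ℝ ∙ v) := h5 ▸ Submodule.mem_span_singleton_self u
    obtain ⟨c, rfl⟩ := Submodule.mem_span_singleton.1 h6
    have h7 := hu.1
    rw [norm_smul, hv.1, mul_one, Real.norm_eq_abs] at h7
    rcases eq_or_eq_neg_of_abs_eq h7 with rfl | rfl
    · simp
    · simp

theorem fvTerm_support {n : ℕ} {ζ : ℝ → ℝ} (h0 : ζ 0 = 0) (S : Finset (E n)) (hS : S.Nonempty) :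
    (Function.support (fvTerm ζ (convexHull ℝ (S : Set (E n))))).Finite := by
  rw [← fvTerm_eq_indicator h0 (S.finite_toSet.isCompact_convexHull ℝ)
    ((Finset.coe_nonempty.2 hS).convexHull)]
  refine (normals_finite S hS).subset (Set.support_indicator_subset.trans ?_)
  exact fun u hu => hu.1

theorem cone_mem {n : ℕ} {A : Set (E n)} (hA : Convex ℝ A) (hne : A.Nonempty) {x : E n} :
    x ∈ convexHull ℝ ({0} ∪ A) ↔ ∃ t : ℝ, 0 ≤ t ∧ t ≤ 1 ∧ ∃ a ∈ A, x = t • a := by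
  rw [Set.singleton_union, convexHull_insert hne, hA.convexHull_eq]
  simp only [convexJoin_singleton_left, Set.mem_iUnion, exists_prop]
  constructor
  · rintro ⟨a, ha, s, t, hs, ht, hst, rfl⟩
    exact ⟨t, ht, by linarith, a, ha, by simp⟩
  · rintro ⟨t, h0, h1, a, ha, rfl⟩
    exact ⟨a, ha, 1 - t, t, by linarith, h0, by ring, by simp⟩

theorem cone_compact {n : ℕ} {A : Set (E n)} (hA : Convex ℝ A) (hne : A.Nonempty)
    (hc : IsCompact A) : IsCompact (convexHull ℝ ({0} ∪ A)) := by
  have : convexHull ℝ ({0} ∪ A) = (fun p : ℝ × E n => p.1 • p.2) '' (Set.Icc 0 1 ×ˢ A) := by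
    ext x
    rw [cone_mem hA hne]
    constructor
    · rintro ⟨t, h0, h1, a, ha, rfl⟩
      exact ⟨(t, a), ⟨⟨h0, h1⟩, ha⟩, rfl⟩
    · rintro ⟨⟨t, a⟩, ⟨⟨h0, h1⟩, ha⟩, rfl⟩
      exact ⟨t, h0, h1, a, ha, rfl⟩
  rw [this]
  exact (isCompact_Icc.prod hc).image (by fun_prop)

theorem cone_vol_add {n : ℕ} {A B : Set (E n)} {u : E n} {h : ℝ} (hh : h ≠ 0)
    (hA : Convex ℝ A) (hB : Convex ℝ B) (hAB : Convex ℝ (A ∪ B)) (hI : (A ∩ B).Nonempty)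
    (cA : IsCompact A) (cB : IsCompact B)
    (eA : ∀ x ∈ A, ⟪x, u⟫ = h) (eB : ∀ x ∈ B, ⟪x, u⟫ = h) :
    (MeasureTheory.volume (convexHull ℝ ({0} ∪ (A ∪ B)))).toReal +
      (MeasureTheory.volume (convexHull ℝ ({0} ∪ (A ∩ B)))).toReal =
    (MeasureTheory.volume (convexHull ℝ ({0} ∪ A))).toReal +
      (MeasureTheory.volume (convexHull ℝ ({0} ∪ B))).toReal := by
  have nA : A.Nonempty := hI.mono Set.inter_subset_left
  have nB : B.Nonempty := hI.mono Set.inter_subset_right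
  have e1 : convexHull ℝ ({0} ∪ (A ∪ B)) = convexHull ℝ ({0} ∪ A) ∪ convexHull ℝ ({0} ∪ B) := by
    ext x
    rw [Set.mem_union, cone_mem hAB (nA.mono Set.subset_union_left), cone_mem hA nA, cone_mem hB nB]
    constructor
    · rintro ⟨t, h0, h1, a, ha | ha, rfl⟩
      · exact Or.inl ⟨t, h0, h1, a, ha, rfl⟩
      · exact Or.inr ⟨t, h0, h1, a, ha, rfl⟩
    · rintro (⟨t, h0, h1, a, ha, rfl⟩ | ⟨t, h0, h1, a, ha, rfl⟩)
      · exact ⟨t, h0, h1, a, Or.inl ha, rfl⟩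
      · exact ⟨t, h0, h1, a, Or.inr ha, rfl⟩
  have e2 : convexHull ℝ ({0} ∪ (A ∩ B)) = convexHull ℝ ({0} ∪ A) ∩ convexHull ℝ ({0} ∪ B) := by
    ext x
    rw [Set.mem_inter_iff, cone_mem (hA.inter hB) hI, cone_mem hA nA, cone_mem hB nB]
    constructor
    · rintro ⟨t, h0, h1, a, ha, rfl⟩
      exact ⟨⟨t, h0, h1, a, ha.1, rfl⟩, ⟨t, h0, h1, a, ha.2, rfl⟩⟩
    · rintro ⟨⟨t, h0, h1, a, ha, rfl⟩, ⟨s, hs0, hs1, b, hb, hab⟩⟩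
      have hts : t = s := by
        have := congrArg (fun x => ⟪x, u⟫) hab
        simp only [inner_smul_left, eA a ha, eB b hb, conj_trivial] at this
        exact mul_right_cancel₀ hh this
      subst hts
      by_cases ht : t = 0
      · obtain ⟨c, hc⟩ := hI
        exact ⟨0, le_rfl, zero_le_one, c, hc, by simp [ht]⟩
      · have : a = b := smul_right_injective _ ht hab
        subst this
        exact ⟨t, h0, h1, a, ⟨ha, hb⟩, rfl⟩
  have kA := cone_compact hA nA cA
  have kB := cone_compact hB nB cB
  have fA := kA.measure_lt_top (μ := MeasureTheory.volume)
  have fB := kB.measure_lt_top (μ := MeasureTheory.volume)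
  rw [e1, e2, ← ENNReal.toReal_add, ← ENNReal.toReal_add fA.ne fB.ne,
    MeasureTheory.measure_union_add_inter _ kB.measurableSet]
  · exact (kA.union kB).measure_lt_top.ne
  · exact (kA.inter_right kB.isClosed).measure_lt_top.ne

/-- On a segment from `p ∈ P` to `q ∈ Q` there is a point of `P ∩ Q`. -/
theorem seg_inter {n : ℕ} {P Q : Set (E n)} (cP : IsCompact P) (cQ : IsCompact Q)
    (hPQ : Convex ℝ (P ∪ Q)) {p q : E n} (hp : p ∈ P) (hq : q ∈ Q) :
    ∃ x ∈ segment ℝ p q, x ∈ P ∩ Q := by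
  have hs : IsPreconnected (segment ℝ p q) := (convex_segment p q).isPreconnected
  have := isPreconnected_closed_iff.1 hs P Q cP.isClosed cQ.isClosed
    (hPQ.segment_subset (Or.inl hp) (Or.inr hq))
    ⟨p, left_mem_segment ℝ p q, hp⟩ ⟨q, right_mem_segment ℝ p q, hq⟩
  exact this

/-- The case of different support values. -/
theorem faces_lt {n : ℕ} {P Q : Set (E n)} (cP : IsCompact P) (cQ : IsCompact Q)
    (nP : P.Nonempty) (nQ : Q.Nonempty)
    (hPQ : Convex ℝ (P ∪ Q)) {u : E n} (hlt : suppFn Q u < suppFn P u) :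
    suppFn (P ∪ Q) u = suppFn P u ∧ suppFn (P ∩ Q) u = suppFn Q u ∧
      face (P ∪ Q) u = face P u ∧ face (P ∩ Q) u = face Q u := by
  obtain ⟨⟨p, hp, hpe⟩, bP⟩ := suppFn_spec cP nP u
  obtain ⟨⟨q, hq, hqe⟩, bQ⟩ := suppFn_spec cQ nQ u
  have key : ∀ y ∈ Q, ⟪y, u⟫ = suppFn Q u → y ∈ P := by
    intro y hy hye
    obtain ⟨x, ⟨a, b, ha, hb, hab, rfl⟩, hxP, hxQ⟩ := seg_inter cP cQ hPQ hp hy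
    have h1 := bQ _ hxQ
    simp only [inner_add_left, inner_smul_left, hpe, hye, conj_trivial] at h1
    have ha0 : a = 0 := by
      have : b = 1 - a := by linarith
      subst this
      have : a * (suppFn P u - suppFn Q u) ≤ 0 := by linarith
      by_contra hne
      have : 0 < a := lt_of_le_of_ne ha (Ne.symm hne)
      have := mul_pos this (sub_pos.2 hlt)
      linarith
    have hb1 : b = 1 := by linarith
    subst ha0 hb1
    simpa using hxP
  have s1 : suppFn (P ∪ Q) u = suppFn P u := by
    refine suppFn_eq ⟨p, Or.inl hp, hpe⟩ ?_
    rintro y (hy | hy)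
    · exact bP y hy
    · exact (bQ y hy).trans hlt.le
  have s2 : suppFn (P ∩ Q) u = suppFn Q u :=
    suppFn_eq ⟨q, ⟨key q hq hqe, hq⟩, hqe⟩ (fun y hy => bQ y hy.2)
  refine ⟨s1, s2, ?_, ?_⟩
  · ext x
    simp only [face, Set.mem_ofPred_eq, s1, Set.mem_union]
    constructor
    · rintro ⟨hx | hx, h⟩
      · exact ⟨hx, h⟩
      · have := bQ x hx; linarith
    · rintro ⟨hx, h⟩; exact ⟨Or.inl hx, h⟩
  · ext x
    simp only [face, Set.mem_ofPred_eq, s2, Set.mem_inter_iff]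
    constructor
    · rintro ⟨hx, h⟩; exact ⟨hx.2, h⟩
    · rintro ⟨hx, h⟩; exact ⟨⟨key x hx h, hx⟩, h⟩

/-- The case of equal support values. -/
theorem faces_eq {n : ℕ} {P Q : Set (E n)} (cP : IsCompact P) (cQ : IsCompact Q)
    (nP : P.Nonempty) (nQ : Q.Nonempty)
    (hPQ : Convex ℝ (P ∪ Q)) {u : E n} (heq : suppFn Q u = suppFn P u) :
    suppFn (P ∪ Q) u = suppFn P u ∧ suppFn (P ∩ Q) u = suppFn P u ∧
      face (P ∪ Q) u = face P u ∪ face Q u ∧ face (P ∩ Q) u = face P u ∩ face Q u := by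
  obtain ⟨⟨p, hp, hpe⟩, bP⟩ := suppFn_spec cP nP u
  obtain ⟨⟨q, hq, hqe⟩, bQ⟩ := suppFn_spec cQ nQ u
  rw [heq] at bQ hqe
  have s1 : suppFn (P ∪ Q) u = suppFn P u := by
    refine suppFn_eq ⟨p, Or.inl hp, hpe⟩ ?_
    rintro y (hy | hy)
    · exact bP y hy
    · exact bQ y hy
  have s2 : suppFn (P ∩ Q) u = suppFn P u := by
    refine suppFn_eq ?_ (fun y hy => bP y hy.1)
    obtain ⟨x, ⟨a, b, ha, hb, hab, rfl⟩, hx⟩ := seg_inter cP cQ hPQ hp hq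
    refine ⟨_, hx, ?_⟩
    simp only [inner_add_left, inner_smul_left, hpe, hqe, conj_trivial]
    rw [← add_mul, hab, one_mul]
  refine ⟨s1, s2, ?_, ?_⟩
  · ext x
    simp only [face, Set.mem_ofPred_eq, s1, heq, Set.mem_union]
    tauto
  · ext x
    simp only [face, Set.mem_ofPred_eq, s2, heq, Set.mem_inter_iff]
    tauto

theorem fvTerm_congr {n : ℕ} {ζ : ℝ → ℝ} {P Q : Set (E n)} {u : E n}
    (h1 : suppFn P u = suppFn Q u) (h2 : face P u = face Q u) : fvTerm ζ P u = fvTerm ζ Q u := by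
  simp only [fvTerm, coneVol, h1, h2]

theorem fvTerm_add {n : ℕ} {ζ : ℝ → ℝ}
    (hζ : ∀ a b : ℝ, 0 ≤ a → 0 ≤ b → ζ (a + b) = ζ a + ζ b) {P Q : Set (E n)}
    (cP : IsCompact P) (cQ : IsCompact Q)
    (nP : P.Nonempty) (nQ : Q.Nonempty) (hP : Convex ℝ P) (hQ : Convex ℝ Q)
    (hPQ : Convex ℝ (P ∪ Q)) (u : E n) :
    fvTerm ζ (P ∪ Q) u + fvTerm ζ (P ∩ Q) u = fvTerm ζ P u + fvTerm ζ Q u := by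
  rcases lt_trichotomy (suppFn Q u) (suppFn P u) with h | h | h
  · obtain ⟨s1, s2, f1, f2⟩ := faces_lt cP cQ nP nQ hPQ h
    rw [fvTerm_congr s1 f1, fvTerm_congr s2 f2]
  · obtain ⟨s1, s2, f1, f2⟩ := faces_eq cP cQ nP nQ hPQ h
    by_cases h0 : suppFn P u = 0
    · simp [fvTerm, s1, s2, h, h0]
    · by_cases hu : ‖u‖ = 1
      · have nI : (P ∩ Q).Nonempty := by
          obtain ⟨p, hp⟩ := nP
          obtain ⟨q, hq⟩ := nQ
          obtain ⟨x, _, hx⟩ := seg_inter cP cQ hPQ hp hq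
          exact ⟨x, hx⟩
        have fI := face_nonempty (cP.inter_right cQ.isClosed) nI u
        have fU := face_convex hPQ u
        rw [f1] at fU
        rw [f2] at fI
        have hv := cone_vol_add h0 (face_convex hP u) (face_convex hQ u) fU fI
          (face_compact cP u) (face_compact cQ u) (fun x hx => hx.2) (fun x hx => hx.2.trans h)
        have hv' : coneVol (P ∪ Q) u + coneVol (P ∩ Q) u = coneVol P u + coneVol Q u := by
          simp only [coneVol, f1, f2]; exact hv
        have nn : ∀ R : Set (E n), 0 ≤ coneVol R u := fun R => ENNReal.toReal_nonneg
        have hz := congrArg ζ hv'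
        rw [hζ _ _ (nn _) (nn _), hζ _ _ (nn _) (nn _)] at hz
        simp only [fvTerm, if_pos hu, s1, s2, h]
        rw [← add_smul, ← add_smul, ← add_div, ← add_div, hz]
      · simp [fvTerm, hu]
  · rw [Set.union_comm] at hPQ
    obtain ⟨s1, s2, f1, f2⟩ := faces_lt cQ cP nQ nP hPQ h
    rw [Set.union_comm, Set.inter_comm, fvTerm_congr s1 f1, fvTerm_congr s2 f2, add_comm]

/-- the facet vector is a valuation on polytopes. -/
theorem fv_valuation {n : ℕ} (ζ : ℝ → ℝ)
    (hζ : ∀ a b : ℝ, 0 ≤ a → 0 ≤ b → ζ (a + b) = ζ a + ζ b)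
    (P Q : Set (E n)) (hP : IsPolytope P) (hQ : IsPolytope Q)
    (hPQ : Convex ℝ (P ∪ Q)) :
    fv ζ (P ∪ Q) + fv ζ (P ∩ Q) = fv ζ P + fv ζ Q := by
  have h0 : ζ 0 = 0 := by
    have := hζ 0 0 le_rfl le_rfl
    rw [add_zero] at this
    linarith
  obtain ⟨S, hS, rfl⟩ := hP
  obtain ⟨T, hT, rfl⟩ := hQ
  classical
  have hU : convexHull ℝ (S : Set (E n)) ∪ convexHull ℝ (T : Set (E n)) =
      convexHull ℝ ((S ∪ T : Finset (E n)) : Set (E n)) := by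
    rw [Finset.coe_union]
    apply Set.Subset.antisymm
    · exact Set.union_subset (convexHull_mono Set.subset_union_left)
        (convexHull_mono Set.subset_union_right)
    · exact convexHull_min (Set.union_subset_union (subset_convexHull ℝ _)
        (subset_convexHull ℝ _)) hPQ
  have fU := fvTerm_support (ζ := ζ) h0 (S ∪ T) (hS.mono Finset.subset_union_left)
  rw [← hU] at fU
  have fS := fvTerm_support (ζ := ζ) h0 S hS
  have fT := fvTerm_support (ζ := ζ) h0 T hT
  have cS := S.finite_toSet.isCompact_convexHull ℝ
  have cT := T.finite_toSet.isCompact_convexHull ℝ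
  have nS : (convexHull ℝ (S : Set (E n))).Nonempty := (Finset.coe_nonempty.2 hS).convexHull
  have nT : (convexHull ℝ (T : Set (E n))).Nonempty := (Finset.coe_nonempty.2 hT).convexHull
  set P := convexHull ℝ (S : Set (E n)) with hPdef
  set Q := convexHull ℝ (T : Set (E n)) with hQdef
  have key := fvTerm_add hζ cS cT nS nT (convex_convexHull ℝ _) (convex_convexHull ℝ _) hPQ
  have nI : (P ∩ Q).Nonempty := by
    obtain ⟨p, hp⟩ := nS
    obtain ⟨q, hq⟩ := nT
    obtain ⟨x, _, hx⟩ := seg_inter cS cT hPQ hp hq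
    exact ⟨x, hx⟩
  have fI : (Function.support (fvTerm ζ (P ∩ Q))).Finite := by
    refine ((fU.union fS).union fT).subset ?_
    intro u hu
    by_contra hn
    simp only [Set.mem_union, Function.mem_support, not_or, not_not] at hn
    have := key u
    rw [hn.1.1, hn.1.2, hn.2] at this
    exact hu (by simpa using this)
  rw [fv_eq h0 (cS.union cT) (nS.mono Set.subset_union_left),
    fv_eq h0 (cS.inter_right cT.isClosed) nI, fv_eq h0 cS nS, fv_eq h0 cT nT,
    ← finsum_add_distrib fU fI, ← finsum_add_distrib fS fT]
  exact finsum_congr key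
end
end

section
/- Let n ≥ 2 and let Z be an SL(n) contravariant valuation from polytopes in ℝⁿ containing the origin to ℝⁿ. If Z(T^k) = 0 for k = 0, 1, …, n−1, then Z(P) = 0 for every polytope P containing the origin with dim P ≤ n−1. -/
open scoped RealInnerProductSpace

noncomputable section

namespace VS
open Module

/-- polytope in a general space -/
def Poly {F : Type*} [AddCommGroup F] [Module ℝ F] (P : Set F) : Prop :=
  ∃ S : Finset F, S.Nonempty ∧ P = convexHull ℝ (S : Set F)

/-- One elimination step: adding a ray to an H-cone. -/
lemma cone_step {G : Type*} [AddCommGroup G] [Module ℝ G] (M : Set (G →ₗ[ℝ] ℝ)) (hM : M.Finite)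
    (s : G) : ∃ M' : Set (G →ₗ[ℝ] ℝ), M'.Finite ∧
      ∀ x, (∃ t : ℝ, 0 ≤ t ∧ ∀ m ∈ M, m (x - t • s) ≤ 0) ↔ ∀ m ∈ M', m x ≤ 0 := by
  classical
  refine ⟨{m ∈ M | m s ≤ 0} ∪
    Set.image2 (fun p q => (p s) • q - (q s) • p) {m ∈ M | 0 < m s} {m ∈ M | m s < 0}, ?_, ?_⟩
  · exact (hM.sep _).union ((hM.sep _).image2 _ (hM.sep _))
  · intro x
    constructor
    · rintro ⟨t, ht, h⟩ m (hm | hm)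
      · have := h m hm.1
        have h2 := hm.2
        simp only [map_sub, map_smul, smul_eq_mul] at this
        nlinarith
      · obtain ⟨p, hp, q, hq, rfl⟩ := hm
        have h1 := h p hp.1
        have h2 := h q hq.1
        have h3 := hp.2
        have h4 := hq.2
        simp only [map_sub, map_smul, smul_eq_mul, LinearMap.sub_apply, LinearMap.smul_apply]
          at h1 h2 ⊢
        nlinarith
    · intro h
      let T : Finset ℝ := insert 0 ((hM.sep (fun m => 0 < m s)).toFinset.image (fun p => p x / p s))
      have hT : T.Nonempty := ⟨0, by simp [T]⟩
      refine ⟨T.max' hT, Finset.le_max' _ _ (by simp [T]), ?_⟩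
      intro m hm
      simp only [map_sub, map_smul, smul_eq_mul]
      have h0 : 0 ≤ T.max' hT := Finset.le_max' _ _ (by simp [T])
      rcases lt_trichotomy (m s) 0 with hs | hs | hs
      · have hmem := T.max'_mem hT
        have hx := h m (Or.inl ⟨hm, hs.le⟩)
        rcases Finset.mem_insert.1 hmem with h1 | h1
        · rw [h1]; linarith
        · obtain ⟨p, hp, hpe⟩ := Finset.mem_image.1 h1
          rw [Set.Finite.mem_toFinset] at hp
          have := h _ (Or.inr ⟨p, hp, m, ⟨hm, hs⟩, rfl⟩)
          rw [← hpe]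
          have hps := hp.2
          simp only [LinearMap.sub_apply, LinearMap.smul_apply, smul_eq_mul] at this
          rw [sub_nonpos, div_mul_eq_mul_div, le_div_iff₀ hps]
          linarith
      · have hx := h m (Or.inl ⟨hm, hs.le⟩)
        rw [hs]; linarith
      · have : m x / m s ≤ T.max' hT := Finset.le_max' _ _ (by
          simp only [T, Finset.mem_insert, Finset.mem_image, Set.Finite.mem_toFinset]
          exact Or.inr ⟨m, ⟨hm, hs⟩, rfl⟩)
        rw [div_le_iff₀ hs] at this
        linarith

lemma cone_H {ι G : Type*} [AddCommGroup G] [Module ℝ G] [FiniteDimensional ℝ G] (v : ι → G)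
    (S : Finset ι) : ∃ M : Set (G →ₗ[ℝ] ℝ), M.Finite ∧
      ∀ x, (∃ c : ι → ℝ, (∀ s ∈ S, 0 ≤ c s) ∧ ∑ s ∈ S, c s • v s = x) ↔ ∀ m ∈ M, m x ≤ 0 := by
  classical
  induction S using Finset.induction_on with
  | empty =>
    let b := Module.finBasis ℝ G
    refine ⟨Set.range b.coord ∪ Set.range (fun i => - b.coord i),
      (Set.finite_range _).union (Set.finite_range _), fun x => ?_⟩
    constructor
    · rintro ⟨c, -, rfl⟩ m -
      simp
    · intro h
      refine ⟨0, by simp, ?_⟩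
      rw [Finset.sum_empty, eq_comm, ← b.forall_coord_eq_zero_iff]
      intro i
      have h1 := h _ (Or.inl ⟨i, rfl⟩)
      have h2 := h _ (Or.inr ⟨i, rfl⟩)
      simp only [LinearMap.neg_apply] at h2
      linarith
  | insert a S ha ih =>
    obtain ⟨M, hM, h⟩ := ih
    obtain ⟨M', hM', h'⟩ := cone_step M hM (v a)
    refine ⟨M', hM', fun x => ?_⟩
    rw [← h' x]
    constructor
    · rintro ⟨c, hc, rfl⟩
      refine ⟨c a, hc _ (by simp), ?_⟩
      rw [← h]
      exact ⟨c, fun s hs => hc s (by simp [hs]), by rw [Finset.sum_insert ha]; abel⟩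
    · rintro ⟨t, ht, hm⟩
      rw [← h] at hm
      obtain ⟨c, hc, hx⟩ := hm
      refine ⟨Function.update c a t, ?_, ?_⟩
      · intro s hs
        by_cases hsa : s = a
        · subst hsa; simpa
        · rw [Function.update_of_ne hsa]
          exact hc s (by simpa [hsa] using hs)
      · rw [Finset.sum_insert ha, Function.update_self]
        have : ∑ s ∈ S, Function.update c a t s • v s = ∑ s ∈ S, c s • v s := by
          refine Finset.sum_congr rfl fun s hs => ?_
          rw [Function.update_of_ne (by rintro rfl; exact ha hs)]
        rw [this, hx]; abel

set_option linter.unusedSectionVars false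
variable {F : Type*} [NormedAddCommGroup F] [NormedSpace ℝ F] [FiniteDimensional ℝ F]

/-- H-representation -/
def IsH (P : Set F) : Prop :=
  ∃ C : Set ((F →ₗ[ℝ] ℝ) × ℝ), C.Finite ∧ P = {x | ∀ m ∈ C, m.1 x ≤ m.2}

lemma Poly.isH {P : Set F} (hP : Poly P) : IsH P := by
  obtain ⟨S, -, rfl⟩ := hP
  obtain ⟨M, hM, h⟩ := cone_H (fun s : F => ((s, 1) : F × ℝ)) S
  refine ⟨(fun m : F × ℝ →ₗ[ℝ] ℝ => (m ∘ₗ LinearMap.inl ℝ F ℝ, - m (0, 1))) '' M,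
    hM.image _, ?_⟩
  ext x
  have hx := h (x, 1)
  have key : ∀ m : F × ℝ →ₗ[ℝ] ℝ, m (x, 1) = m (x, 0) + m (0, 1) := by
    intro m; rw [← map_add]; simp
  simp only [Set.mem_ofPred_eq, Set.forall_mem_image, LinearMap.comp_apply, LinearMap.inl_apply]
  rw [Finset.mem_convexHull']
  have e : (∀ m ∈ M, m (x, 0) ≤ - m (0, 1)) ↔ ∀ m ∈ M, m (x, 1) ≤ 0 := by
    refine forall₂_congr fun m _ => ?_
    rw [key]; constructor <;> intro <;> linarith
  rw [e, ← hx]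
  refine exists_congr fun c => and_congr_right fun _ => ?_
  rw [Prod.ext_iff]
  simp [Prod.fst_sum, Prod.snd_sum, and_comm]

lemma IsH.poly {P : Set F} (hP : IsH P) (hb : Bornology.IsBounded P) (hn : P.Nonempty) :
    Poly P := by
  classical
  obtain ⟨C, hC, rfl⟩ := hP
  set P : Set F := {x | ∀ m ∈ C, m.1 x ≤ m.2} with hPdef
  have hconv : Convex ℝ P := by
    have : P = ⋂ m ∈ C, {x | m.1 x ≤ m.2} := by ext; simp [hPdef]
    rw [this]
    exact convex_iInter₂ fun m _ => convex_halfSpace_le m.1.isLinear _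
  have hclosed : IsClosed P := by
    have : P = ⋂ m ∈ C, {x | m.1 x ≤ m.2} := by ext; simp [hPdef]
    rw [this]
    exact isClosed_biInter fun m _ =>
      isClosed_le (LinearMap.continuous_of_finiteDimensional m.1) continuous_const
  have hcomp : IsCompact P := Metric.isCompact_of_isClosed_isBounded hclosed hb
  have hKM := closure_convexHull_extremePoints hcomp hconv
  have hfin : (P.extremePoints ℝ).Finite := by
    refine Set.Finite.of_finite_image
      (f := fun x => {m ∈ C | m.1 x = m.2}) ?_ ?_
    · refine hC.finite_subsets.subset ?_
      rintro _ ⟨x, -, rfl⟩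
      exact Set.sep_subset _ _
    · intro x hx y hy hxy
      have hxP := hx.1
      have hyP := hy.1
      -- find ε
      have hε : ∀ᶠ ε : ℝ in nhdsWithin 0 (Set.Ioi 0), ∀ m ∈ C,
          m.1 (x + ε • (x - y)) ≤ m.2 := by
        rw [Filter.eventually_all_finite hC]
        intro m hm
        by_cases hma : m.1 x = m.2
        · have : m ∈ {m ∈ C | m.1 y = m.2} := by
            have : m ∈ {m ∈ C | m.1 x = m.2} := ⟨hm, hma⟩
            simpa only [hxy] using this
          have h2 := this.2
          refine Filter.Eventually.of_forall fun ε => ?_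
          simp [hma, h2]
        · have hlt : m.1 x < m.2 := lt_of_le_of_ne (hxP m hm) hma
          have hc : Continuous fun ε : ℝ => m.1 (x + ε • (x - y)) := by
            have := LinearMap.continuous_of_finiteDimensional m.1
            fun_prop
          have ht := (hc.tendsto 0).mono_left (nhdsWithin_le_nhds (s := Set.Ioi 0))
          simp only [zero_smul, add_zero] at ht
          exact (ht.eventually_lt_const hlt).mono fun _ h => h.le
      obtain ⟨ε, hε1, hε2⟩ := (hε.and self_mem_nhdsWithin).exists
      have hε0 : (0:ℝ) < ε := hε2
      by_contra hne
      have hmem : x ∈ openSegment ℝ y (x + ε • (x - y)) := by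
        refine ⟨ε / (1 + ε), 1 / (1 + ε), by positivity, by positivity, by field_simp; ring, ?_⟩
        have h1 : ε / (1 + ε) = 1 - 1 / (1 + ε) := by field_simp; ring
        have h2 : (1 / (1 + ε)) * ε = 1 - 1 / (1 + ε) := by field_simp; ring
        rw [smul_add, smul_smul, h2, h1]
        module
      exact hne (hx.2 hyP hε1 hmem).symm
  have hcl : IsClosed (convexHull ℝ (P.extremePoints ℝ)) := hfin.isClosed_convexHull ℝ
  rw [hcl.closure_eq] at hKM
  refine ⟨hfin.toFinset, ?_, ?_⟩
  · rw [Set.Finite.toFinset_nonempty]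
    exact hcomp.extremePoints_nonempty hn
  · rw [Set.Finite.coe_toFinset]; exact hKM.symm

lemma Poly.bounded {P : Set F} (hP : Poly P) : Bornology.IsBounded P := by
  obtain ⟨S, -, rfl⟩ := hP
  exact (isBounded_convexHull).2 S.finite_toSet.isBounded

lemma Poly.cut {P : Set F} (hP : Poly P) (h0 : (0 : F) ∈ P) (f : F →ₗ[ℝ] ℝ) :
    Poly (P ∩ {x | f x ≤ 0}) := by
  obtain ⟨C, hC, hPC⟩ := hP.isH
  refine IsH.poly ⟨insert (f, 0) C, hC.insert _, ?_⟩ (hP.bounded.subset Set.inter_subset_left)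
    ⟨0, h0, by simp⟩
  ext x
  simp [hPC, and_comm]



variable {G : Type*} [AddCommGroup G]

/-- valuation property -/
def Val (z : Set F → G) : Prop := ∀ P Q : Set F, Poly P → Poly Q → Poly (P ∪ Q) → Poly (P ∩ Q) →
  (0 : F) ∈ P → (0 : F) ∈ Q → z P + z Q = z (P ∪ Q) + z (P ∩ Q)

/-- vanishing on simplices with a vertex at the origin -/
def Simp (z : Set F → G) : Prop := ∀ (ι : Type) [Fintype ι] (v : ι → F), LinearIndependent ℝ v →
  z (convexHull ℝ (insert 0 (Set.range v))) = 0

/-- vanishing on polytopes inside hyperplanes -/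
def Low (z : Set F → G) : Prop := ∀ f : F →ₗ[ℝ] ℝ, f ≠ 0 → ∀ P, Poly P → (0 : F) ∈ P →
  (∀ x ∈ P, f x = 0) → z P = 0

lemma cut_zero {z : Set F → G} (hz : Val z) (hl : Low z) {P : Set F} (hP : Poly P)
    (h0 : (0 : F) ∈ P) (f : F →ₗ[ℝ] ℝ) (h1 : z (P ∩ {x | f x ≤ 0}) = 0)
    (h2 : z (P ∩ {x | (-f) x ≤ 0}) = 0) : z P = 0 := by
  by_cases hf : f = 0
  · subst hf
    simpa using h1
  · have hU : (P ∩ {x | f x ≤ 0}) ∪ (P ∩ {x | (-f) x ≤ 0}) = P := by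
      ext x
      simp only [Set.mem_union, Set.mem_inter_iff, Set.mem_ofPred_eq, LinearMap.neg_apply]
      have := le_total (f x) 0
      constructor
      · tauto
      · intro hx
        rcases this with h | h
        · exact Or.inl ⟨hx, h⟩
        · exact Or.inr ⟨hx, by linarith⟩
    have p1 := hP.cut h0 f
    have p2 := hP.cut h0 (-f)
    have m1 : (0 : F) ∈ P ∩ {x | f x ≤ 0} := ⟨h0, by simp⟩
    have m2 : (0 : F) ∈ P ∩ {x | (-f) x ≤ 0} := ⟨h0, by simp⟩
    have hI : (P ∩ {x | f x ≤ 0}) ∩ (P ∩ {x | (-f) x ≤ 0}) =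
        (P ∩ {x | f x ≤ 0}) ∩ {x | (-f) x ≤ 0} := by
      ext x; simp only [Set.mem_inter_iff]; tauto
    have p3 := p1.cut m1 (-f)
    have h3 : z ((P ∩ {x | f x ≤ 0}) ∩ {x | (-f) x ≤ 0}) = 0 := by
      refine hl f hf _ p3 ⟨m1, by simp⟩ ?_
      rintro x ⟨⟨-, hx1⟩, hx2⟩
      simp only [Set.mem_ofPred_eq, LinearMap.neg_apply] at hx1 hx2
      linarith
    have := hz _ _ p1 p2 (by rwa [hU]) (by rwa [hI]) m1 m2
    rw [hU, hI, h1, h2, h3] at this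
    simpa using this.symm

/-- cone truncated by one inequality -/
def HS (l : F →ₗ[ℝ] ℝ) (m : ℕ → F →ₗ[ℝ] ℝ) (s : Finset ℕ) : Set F :=
  {x | l x ≤ 1 ∧ ∀ i ∈ s, m i x ≤ 0}

lemma zero_mem_HS (l : F →ₗ[ℝ] ℝ) (m : ℕ → F →ₗ[ℝ] ℝ) (s : Finset ℕ) : (0 : F) ∈ HS l m s := by
  simp [HS]

lemma no_ray {P : Set F} (hP : Bornology.IsBounded P) {x : F} (h : ∀ t : ℝ, 0 ≤ t → t • x ∈ P) :
    x = 0 := by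
  obtain ⟨R, hR⟩ := hP.exists_norm_le
  by_contra hx
  have hpos : 0 < ‖x‖ := norm_pos_iff.2 hx
  have hR0 : 0 ≤ R := (norm_nonneg _).trans (hR _ (h 0 le_rfl))
  have := hR _ (h ((R + 1) / ‖x‖) (by positivity))
  rw [norm_smul, Real.norm_of_nonneg (by positivity), div_mul_cancel₀ _ hpos.ne'] at this
  linarith

lemma base_case {z : Set F → G} (hs : Simp z) (l : F →ₗ[ℝ] ℝ) (m : ℕ → F →ₗ[ℝ] ℝ) (s : Finset ℕ)
    (hb : Bornology.IsBounded (HS l m s)) (hm : LinearIndependent ℝ (fun i : s => m i)) :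
    z (HS l m s) = 0 := by
  classical
  let Φ : F →ₗ[ℝ] (s → ℝ) := LinearMap.pi fun i => - m i
  have hΦ : ∀ x i, Φ x i = - m i x := fun x i => rfl
  have hinj : Function.Injective Φ := by
    rw [← LinearMap.ker_eq_bot, LinearMap.ker_eq_bot']
    intro x hx
    have hx' : ∀ i ∈ s, m i x = 0 := fun i hi => by
      have := congrFun hx ⟨i, hi⟩
      rw [hΦ] at this
      simpa using this
    rcases le_total (l x) 0 with h | h
    · refine no_ray hb fun t ht => ⟨?_, fun i hi => ?_⟩
      · rw [map_smul, smul_eq_mul]; nlinarith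
      · rw [map_smul, hx' i hi]; simp
    · refine neg_eq_zero.1 (no_ray hb fun t ht => ⟨?_, fun i hi => ?_⟩)
      · rw [map_smul, map_neg, smul_eq_mul]; nlinarith
      · rw [map_smul, map_neg, hx' i hi]; simp
  have hc1 := hm.fintype_card_le_finrank
  rw [Subspace.dual_finrank_eq] at hc1
  have hc2 := LinearMap.finrank_le_finrank_of_injective hinj
  rw [Module.finrank_fintype_fun_eq_card] at hc2
  let e : F ≃ₗ[ℝ] (s → ℝ) := LinearEquiv.ofInjectiveOfFinrankEq Φ hinj
    (by rw [Module.finrank_fintype_fun_eq_card]; omega)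
  have he : ∀ x i, e x i = - m i x := fun x i => rfl
  let b : Basis s ℝ F := Basis.ofEquivFun e
  have hmb : ∀ i j : s, m i (b j) = if i = j then -1 else 0 := by
    intro i j
    have : e (b j) i = if i = j then 1 else 0 := by
      simp [b, Pi.single_apply]
    rw [he] at this
    split_ifs at this ⊢ <;> linarith
  have hlb : ∀ i, 0 < l (b i) := by
    intro i
    by_contra hneg
    push Not at hneg
    refine b.ne_zero i (no_ray hb fun t ht => ⟨?_, fun j hj => ?_⟩)
    · rw [map_smul, smul_eq_mul]; nlinarith
    · rw [map_smul, hmb ⟨j, hj⟩ i, smul_eq_mul]; split_ifs <;> linarith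
  let w : s → ℝˣ := fun i => Units.mk0 (l (b i))⁻¹ (inv_ne_zero (hlb i).ne')
  let v : s → F := fun i => (l (b i))⁻¹ • b i
  have hv : LinearIndependent ℝ v := b.linearIndependent.units_smul w
  suffices h : HS l m s = convexHull ℝ (insert 0 (Set.range v)) by
    rw [h]; exact hs s v hv
  have hlv : ∀ i, l (v i) = 1 := fun i => by
    simp only [v, map_smul, smul_eq_mul]; exact inv_mul_cancel₀ (hlb i).ne'
  apply Set.Subset.antisymm
  · rintro x ⟨hx1, hx2⟩
    have hxs : x = ∑ i, (e x i * l (b i)) • v i := by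
      conv_lhs => rw [← b.sum_repr x]
      refine Finset.sum_congr rfl fun i _ => ?_
      simp only [v, smul_smul]
      rw [mul_assoc, mul_inv_cancel₀ (hlb i).ne', mul_one]
      rfl
    have hlx : l x = ∑ i, e x i * l (b i) := by
      conv_lhs => rw [hxs]
      simp [map_sum, hlv]
    have hnn : ∀ i, 0 ≤ e x i * l (b i) := fun i =>
      mul_nonneg (by rw [he]; linarith [hx2 i i.2]) (hlb i).le
    have hcv := convex_convexHull ℝ (insert (0 : F) (Set.range v))
    have hsum := hcv.sum_mem (t := (Finset.univ : Finset (Option s)))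
      (w := fun o => o.elim (1 - l x) (fun i => e x i * l (b i)))
      (z := fun o => o.elim 0 v) ?_ ?_ ?_
    · rw [Fintype.sum_option] at hsum
      simp only [Option.elim_none, Option.elim_some, smul_zero, zero_add] at hsum
      rwa [← hxs] at hsum
    · rintro (_ | i) -
      · simpa using hx1
      · exact hnn i
    · rw [Fintype.sum_option]
      simp only [Option.elim_none, Option.elim_some]
      rw [← hlx]; ring
    · rintro (_ | i) -
      · exact subset_convexHull _ _ (by simp)
      · exact subset_convexHull _ _ (Or.inr ⟨i, rfl⟩)
  · refine convexHull_min ?_ ?_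
    · rintro x (rfl | ⟨i, rfl⟩)
      · exact zero_mem_HS l m s
      · refine ⟨(hlv i).le, fun j hj => ?_⟩
        simp only [v, map_smul, smul_eq_mul]
        rw [hmb ⟨j, hj⟩ i]
        have := inv_pos.2 (hlb i)
        split_ifs <;> linarith
    · have : HS l m s = {x | l x ≤ 1} ∩ ⋂ i ∈ s, {x | m i x ≤ 0} := by
        ext; simp [HS]
      rw [this]
      exact (convex_halfSpace_le l.isLinear _).inter
        (convex_iInter₂ fun i _ => convex_halfSpace_le (m i).isLinear _)

/-- modification of the relation on one side of the cut -/
lemma side (l : F →ₗ[ℝ] ℝ) (m : ℕ → F →ₗ[ℝ] ℝ) (s : Finset ℕ) (a : ℕ → ℝ) {i j : ℕ}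
    (hi : i ∈ s) (hj : j ∈ s) (haij : a i * a j < 0) (hrel : ∑ k ∈ s, a k • m k = 0) :
    HS l (Function.update m j (m j - (-a i / a j) • m i)) s =
      HS l m s ∩ {x | (m j - (-a i / a j) • m i) x ≤ 0} ∧
    ∑ k ∈ s, Function.update a i 0 k • (Function.update m j (m j - (-a i / a j) • m i)) k = 0 := by
  classical
  have hij : i ≠ j := by rintro rfl; nlinarith [mul_self_nonneg (a i)]
  have haj : a j ≠ 0 := by rintro h; simp [h] at haij
  have hμ : 0 < - a i / a j := by
    rw [neg_div, neg_pos, div_neg_iff]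
    rcases mul_neg_iff.1 haij with h | h
    · exact Or.inl h
    · exact Or.inr h
  set μ := - a i / a j with hμd
  have hμ2 : μ * a j = - a i := by rw [hμd]; field_simp
  constructor
  · ext x
    simp only [HS, Set.mem_inter_iff, Set.mem_ofPred_eq]
    constructor
    · rintro ⟨h1, h2⟩
      have h3 := h2 j hj
      rw [Function.update_self] at h3
      have h4 := h2 i hi
      rw [Function.update_of_ne hij] at h4
      refine ⟨⟨h1, fun k hk => ?_⟩, h3⟩
      by_cases hkj : k = j
      · subst hkj
        simp only [LinearMap.sub_apply, LinearMap.smul_apply, smul_eq_mul] at h3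
        nlinarith
      · have := h2 k hk
        rwa [Function.update_of_ne hkj] at this
    · rintro ⟨⟨h1, h2⟩, h3⟩
      refine ⟨h1, fun k hk => ?_⟩
      by_cases hkj : k = j
      · subst hkj
        rwa [Function.update_self]
      · rw [Function.update_of_ne hkj]; exact h2 k hk
  · rw [← hrel, ← sub_eq_zero, ← Finset.sum_sub_distrib]
    rw [← Finset.add_sum_erase _ _ hi, ← Finset.add_sum_erase _ _
      (Finset.mem_erase.2 ⟨hij.symm, hj⟩), Finset.sum_eq_zero]
    · rw [Function.update_self, Function.update_of_ne hij, Function.update_of_ne hij.symm,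
        Function.update_self]
      rw [smul_sub, smul_smul, mul_comm (a j) μ, hμ2]
      module
    · intro k hk
      simp only [Finset.mem_erase] at hk
      rw [Function.update_of_ne hk.1, Function.update_of_ne hk.2.1, sub_self]

lemma relation_case {z : Set F → G} (hz : Val z) (hl : Low z) (l : F →ₗ[ℝ] ℝ) (s : Finset ℕ)
    (ih : ∀ i ∈ s, ∀ m : ℕ → F →ₗ[ℝ] ℝ, Poly (HS l m (s.erase i)) → z (HS l m (s.erase i)) = 0)
    (k : ℕ) : ∀ (m : ℕ → F →ₗ[ℝ] ℝ) (a : ℕ → ℝ), (s.filter (fun i => a i ≠ 0)).card = k →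
      (∑ i ∈ s, a i • m i = 0) → (∃ i ∈ s, a i ≠ 0) → Poly (HS l m s) → z (HS l m s) = 0 := by
  classical
  induction k using Nat.strong_induction_on with
  | _ k IH =>
  intro m a hk hrel hex hP
  by_cases hopp : ∃ i ∈ s, ∃ j ∈ s, a i * a j < 0
  · obtain ⟨i, hi, j, hj, haij⟩ := hopp
    have hai : a i ≠ 0 := by rintro h; simp [h] at haij
    have haj : a j ≠ 0 := by rintro h; simp [h] at haij
    have go : ∀ i ∈ s, ∀ j ∈ s, a i * a j < 0 →
        z (HS l m s ∩ {x | (m j - (-a i / a j) • m i) x ≤ 0}) = 0 := by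
      intro i hi j hj haij
      have hai : a i ≠ 0 := by rintro h; simp [h] at haij
      have haj : a j ≠ 0 := by rintro h; simp [h] at haij
      have hij : i ≠ j := by rintro rfl; nlinarith [mul_self_nonneg (a i)]
      obtain ⟨h1, h2⟩ := side l m s a hi hj haij hrel
      have hp := hP.cut (zero_mem_HS l m s) (m j - (-a i / a j) • m i)
      rw [← h1] at hp ⊢
      refine IH _ ?_ _ (Function.update a i 0) rfl h2 ⟨j, hj, ?_⟩ hp
      · rw [← hk]
        apply Finset.card_lt_card
        rw [Finset.ssubset_iff_of_subset]
        · exact ⟨i, by simp [hi, hai], by simp⟩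
        · intro t ht
          simp only [Finset.mem_filter] at ht ⊢
          refine ⟨ht.1, fun h => ht.2 ?_⟩
          by_cases hti : t = i
          · subst hti; simp
          · rw [Function.update_of_ne hti, h]
      · rwa [Function.update_of_ne hij.symm]
    refine cut_zero hz hl hP (zero_mem_HS l m s) _ (go i hi j hj haij) ?_
    have h2 := go j hj i hi (by rwa [mul_comm])
    convert h2 using 3
    ext x
    have hμ : 0 < - a i / a j := by
      rw [neg_div, neg_pos, div_neg_iff]
      rcases mul_neg_iff.1 haij with h | h
      · exact Or.inl h
      · exact Or.inr h
    have hinv : - a j / a i = (- a i / a j)⁻¹ := by field_simp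
    rw [hinv]
    generalize - a i / a j = μ at hμ
    simp only [Set.mem_ofPred_eq, LinearMap.neg_apply, LinearMap.sub_apply, LinearMap.smul_apply,
      smul_eq_mul]
    have : m i x - μ⁻¹ * m j x = μ⁻¹ * (-(m j x - μ * m i x)) := by field_simp; ring
    rw [this]
    have := inv_pos.2 hμ
    constructor
    · intro h; exact mul_nonpos_of_nonneg_of_nonpos this.le h
    · intro h; by_contra hc; push Not at hc; nlinarith [mul_pos this hc]
  · push Not at hopp
    obtain ⟨i, hi, hai⟩ := hex
    have hzero : ∀ x ∈ HS l m s, m i x = 0 := by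
      rintro x ⟨-, hx⟩
      have h1 : ∑ j ∈ s, a i * a j * m j x = 0 := by
        have := congrArg (fun f : F →ₗ[ℝ] ℝ => a i * f x) hrel
        simpa [LinearMap.sum_apply, Finset.mul_sum, mul_assoc] using this
      have h2 := (Finset.sum_eq_zero_iff_of_nonpos (fun j hj =>
        mul_nonpos_of_nonneg_of_nonpos (hopp i hi j hj) (hx j hj))).1 h1 i hi
      simpa [hai] using h2
    by_cases hmi : m i = 0
    · have : HS l m s = HS l m (s.erase i) := by
        ext x
        simp only [HS, Set.mem_ofPred_eq, Finset.mem_erase]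
        refine and_congr_right fun _ => ⟨fun h j hj => h j hj.2, fun h j hj => ?_⟩
        by_cases hji : j = i
        · subst hji; simp [hmi]
        · exact h j ⟨hji, hj⟩
      rw [this] at hP ⊢
      exact ih i hi m hP
    · exact hl (m i) hmi _ hP (zero_mem_HS l m s) hzero

lemma HS_zero {z : Set F → G} (hz : Val z) (hl : Low z) (hs : Simp z) (l : F →ₗ[ℝ] ℝ) (k : ℕ) :
    ∀ (s : Finset ℕ), s.card = k → ∀ m : ℕ → F →ₗ[ℝ] ℝ, Poly (HS l m s) → z (HS l m s) = 0 := by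
  induction k with
  | zero =>
    intro s hk m hP
    rw [Finset.card_eq_zero] at hk
    subst hk
    exact base_case hs l m _ hP.bounded linearIndependent_empty_type
  | succ k IH =>
    intro s hk m hP
    by_cases hm : LinearIndependent ℝ (fun i : s => m i)
    · exact base_case hs l m s hP.bounded hm
    · rw [Fintype.not_linearIndependent_iff] at hm
      obtain ⟨g, hg, i, hi⟩ := hm
      classical
      let a : ℕ → ℝ := fun j => if h : j ∈ s then g ⟨j, h⟩ else 0
      refine relation_case hz hl l s
        (fun j hj m' hP' => IH _ (by rw [Finset.card_erase_of_mem hj]; omega) m' hP') _ m a rfl ?_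
        ⟨i, i.2, by simpa [a] using hi⟩ hP
      rw [← hg, ← Finset.sum_coe_sort]
      exact Finset.sum_congr rfl fun j _ => by simp [a]

/-- several inhomogeneous inequalities -/
def HL (L M : List (F →ₗ[ℝ] ℝ)) : Set F := {x | (∀ f ∈ L, f x ≤ 1) ∧ ∀ f ∈ M, f x ≤ 0}

lemma HL_one {z : Set F → G} (hz : Val z) (hl : Low z) (hs : Simp z) (l : F →ₗ[ℝ] ℝ)
    (M : List (F →ₗ[ℝ] ℝ)) (hP : Poly (HL [l] M)) : z (HL [l] M) = 0 := by
  have : HL [l] M = HS l (fun i => M.getD i 0) (Finset.range M.length) := by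
    ext x
    simp only [HL, HS, List.mem_singleton, forall_eq, Set.mem_ofPred_eq, Finset.mem_range]
    refine and_congr_right fun _ => ⟨fun h i hi => ?_, fun h f hf => ?_⟩
    · rw [List.getD_eq_getElem _ _ hi]
      exact h _ (List.getElem_mem hi)
    · obtain ⟨i, hi, rfl⟩ := List.getElem_of_mem hf
      have := h i hi
      rwa [List.getD_eq_getElem _ _ hi] at this
  rw [this] at hP ⊢
  exact HS_zero hz hl hs l _ _ rfl _ hP

lemma HL_zero {z : Set F → G} (hz : Val z) (hl : Low z) (hs : Simp z) (k : ℕ) :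
    ∀ (L M : List (F →ₗ[ℝ] ℝ)), L.length = k → Poly (HL L M) → z (HL L M) = 0 := by
  induction k with
  | zero =>
    intro L M hL hP
    rw [List.length_eq_zero_iff] at hL
    subst hL
    have : HL [] M = HL [0] M := by ext x; simp [HL]
    rw [this] at hP ⊢
    exact HL_one hz hl hs 0 M hP
  | succ k IH =>
    intro L M hL hP
    match L, hL with
    | [l], _ => exact HL_one hz hl hs l M hP
    | l₁ :: l₂ :: L, hL =>
      have h0 : (0 : F) ∈ HL (l₁ :: l₂ :: L) M := by simp [HL]
      have e1 : HL (l₁ :: l₂ :: L) M ∩ {x | (l₂ - l₁) x ≤ 0} = HL (l₁ :: L) ((l₂ - l₁) :: M) := by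
        ext x
        simp only [HL, Set.mem_inter_iff, Set.mem_ofPred_eq, List.forall_mem_cons,
          LinearMap.sub_apply]
        constructor
        · rintro ⟨⟨⟨a, b, c⟩, d⟩, e⟩; exact ⟨⟨a, c⟩, e, d⟩
        · rintro ⟨⟨a, c⟩, e, d⟩; exact ⟨⟨⟨a, by linarith, c⟩, d⟩, e⟩
      have e2 : HL (l₁ :: l₂ :: L) M ∩ {x | (-(l₂ - l₁)) x ≤ 0} =
          HL (l₂ :: L) ((-(l₂ - l₁)) :: M) := by
        ext x
        simp only [HL, Set.mem_inter_iff, Set.mem_ofPred_eq, List.forall_mem_cons,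
          LinearMap.sub_apply, LinearMap.neg_apply]
        constructor
        · rintro ⟨⟨⟨a, b, c⟩, d⟩, e⟩; exact ⟨⟨b, c⟩, e, d⟩
        · rintro ⟨⟨a, c⟩, e, d⟩; exact ⟨⟨⟨by linarith, a, c⟩, d⟩, e⟩
      have p1 := hP.cut h0 (l₂ - l₁)
      have p2 := hP.cut h0 (-(l₂ - l₁))
      refine cut_zero hz hl hP h0 (l₂ - l₁) ?_ ?_
      · rw [e1] at p1 ⊢
        exact IH _ _ (by simpa using hL) p1
      · rw [e2] at p2 ⊢
        exact IH _ _ (by simpa using hL) p2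

lemma Poly.exists_HL {P : Set F} (hP : Poly P) (h0 : (0 : F) ∈ P) : ∃ L M, P = HL L M := by
  classical
  obtain ⟨C, hC, hPC⟩ := hP.isH
  have hc : ∀ m ∈ C, 0 ≤ m.2 := by
    intro m hm
    rw [hPC] at h0
    simpa using h0 m hm
  refine ⟨((hC.sep (fun m => 0 < m.2)).toFinset.toList.map (fun m => m.2⁻¹ • m.1)),
    ((hC.sep (fun m => m.2 = 0)).toFinset.toList.map (fun m => m.1)), ?_⟩
  rw [hPC]
  ext x
  simp only [HL, Set.mem_ofPred_eq, List.forall_mem_map, Finset.mem_toList,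
    Set.Finite.mem_toFinset, LinearMap.smul_apply, smul_eq_mul]
  constructor
  · intro h
    refine ⟨fun m hm => ?_, fun m hm => ?_⟩
    · rw [inv_mul_le_iff₀ hm.2, mul_one]; exact h m hm.1
    · rw [← hm.2]; exact h m hm.1
  · rintro ⟨h1, h2⟩ m hm
    rcases (hc m hm).lt_or_eq with h | h
    · have := h1 m ⟨hm, h⟩
      rwa [inv_mul_le_iff₀ h, mul_one] at this
    · have := h2 m ⟨hm, h.symm⟩
      rwa [← h]

lemma all_zero {z : Set F → G} (hz : Val z) (hl : Low z) (hs : Simp z) {P : Set F} (hP : Poly P)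
    (h0 : (0 : F) ∈ P) : z P = 0 := by
  obtain ⟨L, M, rfl⟩ := hP.exists_HL h0
  exact HL_zero hz hl hs _ L M rfl hP

lemma Poly.image {F' : Type*} [AddCommGroup F'] [Module ℝ F'] {P : Set F} (hP : Poly P)
    (f : F →ₗ[ℝ] F') : Poly (f '' P) := by
  classical
  obtain ⟨S, hS, rfl⟩ := hP
  refine ⟨S.image f, hS.image _, ?_⟩
  rw [f.image_convexHull, Finset.coe_image]

lemma Val.restrict {z : Set F → G} (hz : Val z) (W : Submodule ℝ F) :
    Val (fun Q : Set W => z (W.subtype '' Q)) := by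
  intro P Q hP hQ hU hI h0P h0Q
  have i1 := Set.image_union W.subtype P Q
  have i2 := Set.image_inter (s := P) (t := Q) W.injective_subtype
  have := hz _ _ (hP.image W.subtype) (hQ.image W.subtype)
    (by rw [← i1]; exact hU.image _) (by rw [← i2]; exact hI.image _)
    ⟨0, h0P, by simp⟩ ⟨0, h0Q, by simp⟩
  simpa only [i1, i2] using this

lemma simplex_image {F' : Type*} [AddCommGroup F'] [Module ℝ F'] (f : F →ₗ[ℝ] F') {ι : Type*}
    (v : ι → F) : f '' (convexHull ℝ (insert 0 (Set.range v))) =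
      convexHull ℝ (insert 0 (Set.range (f ∘ v))) := by
  rw [f.image_convexHull, Set.image_insert_eq, map_zero, Set.range_comp]

lemma exists_restrict {P : Set F} (hP : Poly P) (h0 : (0 : F) ∈ P) (W : Submodule ℝ F)
    (hPW : P ⊆ W) : ∃ Q : Set W, Poly Q ∧ (0 : W) ∈ Q ∧ P = W.subtype '' Q := by
  classical
  obtain ⟨S, hS, rfl⟩ := hP
  have hSW : (S : Set F) ⊆ W := (subset_convexHull ℝ _).trans hPW
  let T : Finset W := S.preimage W.subtype W.injective_subtype.injOn
  have hTS : W.subtype '' (T : Set W) = S := by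
    rw [Finset.coe_preimage, Set.image_preimage_eq_iff]
    simpa using hSW
  have hTn : T.Nonempty := by
    rw [← Finset.coe_nonempty, ← Set.image_nonempty (f := W.subtype), hTS]
    exact hS
  have e : convexHull ℝ (S : Set F) = W.subtype '' (convexHull ℝ (T : Set W)) := by
    rw [LinearMap.image_convexHull, hTS]
  refine ⟨convexHull ℝ (T : Set W), ⟨T, hTn, rfl⟩, ?_, e⟩
  rw [e] at h0
  obtain ⟨y, hy, hy0⟩ := h0
  have : y = 0 := W.injective_subtype (by simpa using hy0)
  rwa [this] at hy

theorem abstract_main (d : ℕ) : ∀ (F : Type) [NormedAddCommGroup F] [NormedSpace ℝ F]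
    [FiniteDimensional ℝ F], finrank ℝ F = d → ∀ z : Set F → G, Val z → Simp z →
    ∀ P : Set F, Poly P → (0 : F) ∈ P → z P = 0 := by
  induction d using Nat.strong_induction_on with
  | _ d IH =>
  intro F _ _ _ hd z hz hs P hP h0
  refine all_zero hz ?_ hs hP h0
  intro f hf Q hQ h0Q hfQ
  let W := LinearMap.ker f
  obtain ⟨R, hR, h0R, rfl⟩ := exists_restrict hQ h0Q W (fun x hx => hfQ x hx)
  have hlt : finrank ℝ W < d := by
    rw [← hd]
    refine Submodule.finrank_lt ?_
    intro h
    exact hf (LinearMap.ker_eq_top.1 h)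
  refine IH _ hlt W rfl (fun Q : Set W => z (W.subtype '' Q)) (hz.restrict W) ?_ R hR h0R
  intro ι _ v hv
  change z (W.subtype '' _) = 0
  rw [simplex_image]
  exact hs ι _ (hv.map' _ W.ker_subtype)

end VS

namespace VS
open Module

/-- every simplex of dimension at most `n - 1` with a vertex at the origin is an `SL(n)` image of
a standard simplex -/
lemma exists_SL {n : ℕ} {ι : Type} [Fintype ι] (w : ι → E n) (hw : LinearIndependent ℝ w)
    (hk : Fintype.card ι < n) : ∃ φ : Matrix.SpecialLinearGroup (Fin n) ℝ,
      act (φ : Matrix (Fin n) (Fin n) ℝ) '' Tk n (Fintype.card ι) =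
        convexHull ℝ (insert 0 (Set.range w)) := by
  classical
  set k := Fintype.card ι with hkd
  let B := Basis.sumExtend hw
  have : Finite (ι ⊕ Basis.sumExtendIndex hw) := Module.Finite.finite_basis B
  have : Finite (Basis.sumExtendIndex hw) := Finite.of_injective _ (Sum.inr_injective (α := ι))
  have := Fintype.ofFinite (Basis.sumExtendIndex hw)
  have hcard : k + Fintype.card (Basis.sumExtendIndex hw) = n := by
    have := Module.finrank_eq_card_basis B
    rw [Fintype.card_sum] at this
    simpa using this.symm
  let e : ι ⊕ Basis.sumExtendIndex hw ≃ Fin n :=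
    ((Equiv.sumCongr (Fintype.equivFin ι) (Fintype.equivFin _)).trans finSumFinEquiv).trans
      (finCongr hcard)
  have hel : ∀ i : ι, ((e (Sum.inl i) : Fin n) : ℕ) < k := by
    intro i
    simp [e, hkd]
  have her : ∀ i, k ≤ ((e (Sum.inr i) : Fin n) : ℕ) := by
    intro i
    simp [e, hkd]
  let b : Basis (Fin n) ℝ (E n) := B.reindex e
  have hbl : ∀ i : ι, b (e (Sum.inl i)) = w i := by
    intro i
    simp [b, B, Basis.sumExtend]
    rfl
  let A : Matrix (Fin n) (Fin n) ℝ := Matrix.of fun i j => b j i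
  have hA : A.det ≠ 0 := by
    have h1 : A = (EuclideanSpace.basisFun (Fin n) ℝ).toBasis.toMatrix b := by
      ext i j
      simp [A, Basis.toMatrix_apply]
    rw [h1]
    have := (EuclideanSpace.basisFun (Fin n) ℝ).toBasis.invertibleToMatrix b
    exact (Matrix.isUnit_det_of_invertible _).ne_zero
  let q : Fin n := ⟨k, hk⟩
  let A' : Matrix (Fin n) (Fin n) ℝ := A.updateCol q (A.det⁻¹ • fun i => A i q)
  have hA' : A'.det = 1 := by
    simp only [A']
    rw [Matrix.det_updateCol_smul]
    have : A.updateCol q (fun i => A i q) = A := Matrix.updateCol_eq_self A q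
    rw [this, inv_mul_cancel₀ hA]
  refine ⟨⟨A', hA'⟩, ?_⟩
  have hact : ∀ j : Fin n, (j : ℕ) < k → act A' (EuclideanSpace.single j (1 : ℝ)) = b j := by
    intro j hj
    have hjq : j ≠ q := by rintro rfl; simp [q] at hj
    ext i
    simp [act, A', A, Matrix.updateCol_ne hjq, Matrix.toLpLin_apply]
  unfold Tk
  change act A' '' _ = _
  rw [LinearMap.image_convexHull, Set.image_union, Set.image_singleton, map_zero,
    Set.singleton_union, Set.image_image]
  congr 2
  ext x
  constructor
  · rintro ⟨j, hj, rfl⟩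
    have hj' : (j : ℕ) < k := hj
    beta_reduce
    rw [hact j hj']
    obtain ⟨o, rfl⟩ := e.surjective j
    rcases o with i | i
    · exact ⟨i, (hbl i).symm⟩
    · exact absurd hj' (not_lt.2 (her i))
  · rintro ⟨i, rfl⟩
    exact ⟨e (Sum.inl i), hel i, by beta_reduce; rw [hact _ (hel i), hbl]⟩

end VS

/-- an SL(n) contravariant valuation on polytopes containing the origin,
vanishing on all `T^k`, `k ≤ n-1`, vanishes on all lower-dimensional such polytopes. -/
theorem vanishing_on_simplices_implies_simple {n : ℕ} (hn : 2 ≤ n) (Z : Set (E n) → E n)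
    (hval : ∀ P Q : Set (E n), IsPolytope P → IsPolytope Q →
      IsPolytope (P ∪ Q) → IsPolytope (P ∩ Q) → (0 : E n) ∈ P → (0 : E n) ∈ Q →
      Z P + Z Q = Z (P ∪ Q) + Z (P ∩ Q))
    (hcontra : ∀ (φ : Matrix.SpecialLinearGroup (Fin n) ℝ) (P : Set (E n)),
      IsPolytope P → (0 : E n) ∈ P →
      Z (act (φ : Matrix (Fin n) (Fin n) ℝ) '' P)
        = act (invT (φ : Matrix (Fin n) (Fin n) ℝ)) (Z P))
    (hT : ∀ k : ℕ, k ≤ n - 1 → Z (Tk n k) = 0) :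
    ∀ P : Set (E n), IsPolytope P → (0 : E n) ∈ P → polyDim P ≤ n - 1 → Z P = 0 := by
  intro P hP h0 hdim
  have hPp : VS.Poly P := hP
  let W : Submodule ℝ (E n) := Submodule.span ℝ P
  have hW : Module.finrank ℝ W ≤ n - 1 := by
    have h1 : (affineSpan ℝ P).direction = W := by
      rw [direction_affineSpan, vectorSpan_eq_span_vsub_set_right ℝ h0]
      simp [W]
    unfold polyDim at hdim
    rwa [h1] at hdim
  obtain ⟨Q, hQ, h0Q, hPQ⟩ := VS.exists_restrict hPp h0 W Submodule.subset_span
  have hz : VS.Val Z := hval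
  rw [hPQ]
  refine VS.abstract_main _ W rfl (fun Q : Set W => Z (W.subtype '' Q)) (hz.restrict W) ?_ Q hQ h0Q
  intro ι _ v hv
  change Z (W.subtype '' _) = 0
  rw [VS.simplex_image]
  have hw : LinearIndependent ℝ (W.subtype ∘ v) := hv.map' _ W.ker_subtype
  have hcard := hv.fintype_card_le_finrank
  obtain ⟨φ, hφ⟩ := VS.exists_SL _ hw (by omega)
  have hTp : IsPolytope (Tk n (Fintype.card ι)) := by
    classical
    have hf : (({0} : Set (E n)) ∪ (fun i : Fin n => EuclideanSpace.single i (1 : ℝ)) ''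
        {i | (i : ℕ) < Fintype.card ι}).Finite := Set.toFinite _
    exact ⟨hf.toFinset, ⟨0, by simp⟩, by rw [Set.Finite.coe_toFinset]; rfl⟩
  have hT0 : (0 : E n) ∈ Tk n (Fintype.card ι) := subset_convexHull ℝ _ (by simp)
  rw [← hφ, hcontra φ _ hTp hT0, hT _ (by omega), map_zero]
end
end

section
/- Let n ≥ 3 and let Z be a valuation from polytopes in ℝⁿ containing the origin to ℝⁿ satisfying Z(φP) = φ^{-T}Z(P) for all φ ∈ SL(n,ℝ). Then Z is simple, i.e., Z(P) = 0 for every such polytope P with dim P ≤ n−1. -/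
open scoped RealInnerProductSpace

noncomputable section

set_option linter.unusedSectionVars false

namespace CV
variable {V : Type*} [NormedAddCommGroup V] [NormedSpace ℝ V]

/-- Finite intersection of closed half-spaces. -/
def HP (P : Set V) : Prop :=
  ∃ F : Finset ((V →ₗ[ℝ] ℝ) × ℝ), P = {x | ∀ p ∈ F, p.1 x ≤ p.2}

/-- Convex hull of a finite set. -/
def VP (P : Set V) : Prop := ∃ S : Finset V, P = convexHull ℝ (S : Set V)

/-- One step of Fourier-Motzkin elimination. -/
lemma fm (K : Finset (ℝ × (V →ₗ[ℝ] ℝ) × ℝ)) (h0 : ∃ k ∈ K, k.1 < 0) :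
    HP {x : V | ∃ t : ℝ, ∀ k ∈ K, k.1 * t ≤ k.2.2 - k.2.1 x} := by
  classical
  refine ⟨(K.filter (fun k => k.1 = 0)).image (fun k => k.2) ∪
    ((K.filter (fun k => 0 < k.1)) ×ˢ (K.filter (fun k => k.1 < 0))).image
      (fun p => (p.1.1 • p.2.2.1 - p.2.1 • p.1.2.1, p.1.1 * p.2.2.2 - p.2.1 * p.1.2.2)), ?_⟩
  ext x
  simp only [Set.mem_ofPred_eq]
  constructor
  · rintro ⟨t, ht⟩ p hp
    rcases Finset.mem_union.1 hp with hp | hp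
    · obtain ⟨k, hk, rfl⟩ := Finset.mem_image.1 hp
      obtain ⟨hk, hk0⟩ := Finset.mem_filter.1 hk
      have := ht k hk
      rw [hk0] at this
      linarith
    · obtain ⟨⟨k, l⟩, hkl, rfl⟩ := Finset.mem_image.1 hp
      obtain ⟨hk, hl⟩ := Finset.mem_product.1 hkl
      obtain ⟨hk, hk0⟩ := Finset.mem_filter.1 hk
      obtain ⟨hl, hl0⟩ := Finset.mem_filter.1 hl
      have h1 := ht _ hk
      have h2 := ht _ hl
      simp only at hk0 hl0 h1 h2
      simp only [LinearMap.sub_apply, LinearMap.smul_apply, smul_eq_mul]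
      nlinarith [mul_le_mul_of_nonneg_left h2 hk0.le, mul_le_mul_of_nonpos_left h1 hl0.le]
  · intro h
    obtain ⟨k0, hk0, hk0'⟩ := h0
    have hne : (K.filter (fun k => k.1 < 0)).Nonempty := ⟨k0, Finset.mem_filter.2 ⟨hk0, hk0'⟩⟩
    obtain ⟨q, hq, hqmax⟩ := Finset.exists_max_image (K.filter (fun k => k.1 < 0))
      (fun k => (k.2.2 - k.2.1 x) / k.1) hne
    refine ⟨(q.2.2 - q.2.1 x) / q.1, fun k hk => ?_⟩
    rcases lt_trichotomy k.1 0 with hk1 | hk1 | hk1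
    · have := hqmax k (Finset.mem_filter.2 ⟨hk, hk1⟩)
      have h3 := mul_le_mul_of_nonpos_left this hk1.le
      rwa [mul_div_cancel₀ _ hk1.ne] at h3
    · have := h k.2 (Finset.mem_union_left _ (Finset.mem_image_of_mem _
        (Finset.mem_filter.2 ⟨hk, hk1⟩)))
      rw [hk1]; linarith
    · have := h _ (Finset.mem_union_right _ (Finset.mem_image_of_mem _
        (Finset.mem_product.2 (⟨Finset.mem_filter.2 ⟨hk, hk1⟩, hq⟩ : (k, q).1 ∈ _ ∧ (k,q).2 ∈ _))))
      have hq1 := (Finset.mem_filter.1 hq).2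
      simp only [LinearMap.sub_apply, LinearMap.smul_apply, smul_eq_mul] at this
      rw [← mul_div_assoc, div_le_iff_of_neg hq1]
      nlinarith

lemma HP.inter {P Q : Set V} (hP : HP P) (hQ : HP Q) : HP (P ∩ Q) := by
  classical
  obtain ⟨F, rfl⟩ := hP
  obtain ⟨G, rfl⟩ := hQ
  refine ⟨F ∪ G, ?_⟩
  ext x
  simp only [Set.mem_inter_iff, Set.mem_ofPred_eq, Finset.mem_union]
  constructor
  · rintro ⟨h1, h2⟩ p (hp | hp)
    exacts [h1 p hp, h2 p hp]
  · intro h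
    exact ⟨fun p hp => h p (Or.inl hp), fun p hp => h p (Or.inr hp)⟩

lemma HP.half (f : V →ₗ[ℝ] ℝ) (b : ℝ) : HP {x | f x ≤ b} :=
  ⟨{(f, b)}, by ext x; simp⟩

lemma HP.half' (f : V →ₗ[ℝ] ℝ) (b : ℝ) : HP {x | b ≤ f x} :=
  ⟨{(-f, -b)}, by ext x; simp⟩

lemma VP.isCompact {P : Set V} (h : VP P) : IsCompact P := by
  obtain ⟨S, rfl⟩ := h
  exact S.finite_toSet.isCompact_convexHull ℝ

lemma VP.convex {P : Set V} (h : VP P) : Convex ℝ P := by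
  obtain ⟨S, rfl⟩ := h
  exact convex_convexHull ℝ _

lemma HP.insert {T : Set V} (hT : T.Finite) (h0 : (0 : V) ∈ T) (hH : HP (convexHull ℝ T)) (w : V) :
    HP (convexHull ℝ (insert w T)) := by
  classical
  have hcomp : IsCompact (convexHull ℝ T) := hT.isCompact_convexHull ℝ
  have h0' : (0 : V) ∈ convexHull ℝ T := subset_convexHull ℝ _ h0
  obtain ⟨F, hF⟩ := hH
  have hb : ∀ p ∈ F, 0 ≤ p.2 := by
    rw [hF] at h0'
    intro p hp
    simpa using h0' p hp
  have hrec : ∀ y : V, (∀ p ∈ F, p.1 y ≤ 0) → y = 0 := by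
    intro y hy
    obtain ⟨R, hR⟩ := hcomp.isBounded.exists_norm_le
    by_contra hne
    have hpos : 0 < ‖y‖ := norm_pos_iff.2 hne
    have hRn : 0 ≤ R := (norm_nonneg _).trans (hR 0 h0')
    have hmem : ((R + 1) / ‖y‖) • y ∈ convexHull ℝ T := by
      rw [hF]
      intro p hp
      rw [map_smul, smul_eq_mul]
      have : 0 ≤ (R + 1) / ‖y‖ := by positivity
      nlinarith [mul_nonneg this (neg_nonneg.2 (hy p hp)), hb p hp]
    have := hR _ hmem
    rw [norm_smul, Real.norm_of_nonneg (by positivity), div_mul_cancel₀ _ hpos.ne'] at this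
    linarith
  have hmemF : ∀ x, x ∈ convexHull ℝ T ↔ ∀ p ∈ F, p.1 x ≤ p.2 := by
    intro x; rw [hF]; rfl
  have key := fm (V := V) (F.image (fun p => (p.2 - p.1 w, p.1, p.2)) ∪
    {((1 : ℝ), (0 : V →ₗ[ℝ] ℝ), (1 : ℝ)), ((-1 : ℝ), (0 : V →ₗ[ℝ] ℝ), (0 : ℝ))})
    ⟨(-1, 0, 0), by simp, by norm_num⟩
  convert key using 1
  rw [convexHull_insert ⟨0, h0⟩]
  ext x
  simp only [mem_convexJoin, Set.mem_singleton_iff, exists_eq_left, Set.mem_ofPred_eq]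
  constructor
  · rintro ⟨y, hy, a, t, ha, ht, hat, rfl⟩
    refine ⟨a, ?_⟩
    intro k hk
    simp only [Finset.mem_union, Finset.mem_image, Finset.mem_insert, Finset.mem_singleton] at hk
    rcases hk with ⟨p, hp, rfl⟩ | rfl | rfl
    · have h1 := (hmemF y).1 hy p hp
      have : t = 1 - a := by linarith
      subst this
      simp only [map_add, map_smul, smul_eq_mul]
      nlinarith [mul_le_mul_of_nonneg_left h1 ht]
    · simp; linarith
    · simp; linarith
  · rintro ⟨t, ht⟩
    have ht1 : t ≤ 1 := by simpa using ht (1, 0, 1) (by simp)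
    have ht0 : 0 ≤ t := by simpa using ht (-1, 0, 0) (by simp)
    have hk : ∀ p ∈ F, (p.2 - p.1 w) * t ≤ p.2 - p.1 x := fun p hp =>
      ht (p.2 - p.1 w, p.1, p.2) (Finset.mem_union_left _ (Finset.mem_image_of_mem _ hp))
    rcases eq_or_lt_of_le ht1 with rfl | hlt
    · have : x - w = 0 := hrec _ (fun p hp => by have := hk p hp; rw [map_sub]; linarith)
      have hx : x = w := sub_eq_zero.1 this
      exact ⟨0, h0', by rw [hx]; exact left_mem_segment ℝ _ _⟩
    · have hs : 0 < 1 - t := by linarith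
      refine ⟨(1 - t)⁻¹ • (x - t • w), (hmemF _).2 ?_, t, 1 - t, ht0, hs.le, by ring, ?_⟩
      · intro p hp
        rw [map_smul, smul_eq_mul, inv_mul_le_iff₀ hs, map_sub, map_smul, smul_eq_mul]
        linarith [hk p hp]
      · rw [smul_inv_smul₀ hs.ne']; abel

variable [FiniteDimensional ℝ V]

lemma HP.zero : HP ({0} : Set V) := by
  classical
  let b := Module.finBasis ℝ V
  refine ⟨Finset.univ.image (fun i => (b.coord i, 0)) ∪
    Finset.univ.image (fun i => (-b.coord i, 0)), ?_⟩
  ext x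
  simp only [Set.mem_singleton_iff, Set.mem_ofPred_eq, Finset.mem_union, Finset.mem_image,
    Finset.mem_univ, true_and]
  constructor
  · rintro rfl p (⟨i, rfl⟩ | ⟨i, rfl⟩) <;> simp
  · intro h
    apply b.ext_elem
    intro i
    have h1 := h _ (Or.inl ⟨i, rfl⟩)
    have h2 := h _ (Or.inr ⟨i, rfl⟩)
    simp at h1 h2
    simp
    linarith

lemma VP.hp {P : Set V} (h : VP P) (h0 : (0 : V) ∈ P) : HP P := by
  classical
  have key : ∀ S : Finset V, HP (convexHull ℝ (Insert.insert (0 : V) (S : Set V))) := by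
    intro S
    induction S using Finset.induction_on with
    | empty => simpa using HP.zero
    | insert a s _ ih =>
      rw [Finset.coe_insert, Set.insert_comm]
      exact HP.insert (s.finite_toSet.insert _) (Set.mem_insert _ _) ih a
  obtain ⟨S, rfl⟩ := h
  have := key S
  rwa [show convexHull ℝ (Insert.insert (0 : V) (S : Set V)) = convexHull ℝ (S : Set V) from ?_] at this
  apply subset_antisymm
  · apply convexHull_min _ (convex_convexHull ℝ _)
    rw [Set.insert_subset_iff]
    exact ⟨h0, subset_convexHull ℝ _⟩
  · exact convexHull_mono (Set.subset_insert _ _)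

lemma HP.vp {P : Set V} (h : HP P) (hc : IsCompact P) : VP P := by
  classical
  obtain ⟨F, hF⟩ := h
  have hconv : Convex ℝ P := by
    rw [hF]
    have : {x : V | ∀ p ∈ F, p.1 x ≤ p.2} = ⋂ p ∈ F, {x | p.1 x ≤ p.2} := by
      ext; simp
    rw [this]
    exact convex_iInter₂ fun p _ => convex_halfSpace_le p.1.isLinear _
  have hmem : ∀ x, x ∈ P ↔ ∀ p ∈ F, p.1 x ≤ p.2 := by
    intro x; rw [hF]; rfl
  have hinj : Set.InjOn (fun x : V => F.filter (fun p => p.1 x = p.2)) (P.extremePoints ℝ) := by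
    intro x hx y hy hxy
    by_contra hne
    have hxP := hx.1
    have hyP := hy.1
    have hev : ∀ᶠ ε in nhds (0 : ℝ), ∀ p ∈ F, p.1 (x + ε • (y - x)) ≤ p.2 := by
      rw [Filter.eventually_all_finset]
      intro p hp
      rcases eq_or_lt_of_le ((hmem x).1 hxP p hp) with he | hl
      · have hm : p ∈ F.filter (fun p => p.1 y = p.2) := by
          have : p ∈ F.filter (fun p => p.1 x = p.2) := Finset.mem_filter.2 ⟨hp, he⟩
          simp only at hxy
          rwa [hxy] at this
        have he' := (Finset.mem_filter.1 hm).2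
        refine Filter.Eventually.of_forall fun ε => ?_
        simp [he, he']
      · have hcont : Continuous fun ε : ℝ => p.1 (x + ε • (y - x)) := by
          simp only [map_add, map_smul, smul_eq_mul]
          fun_prop
        have := hcont.tendsto 0
        simp only [zero_smul, add_zero] at this
        exact (this.eventually (gt_mem_nhds hl)).mono fun ε hε => hε.le
    have hev2 : ∀ᶠ ε in nhds (0 : ℝ), ∀ p ∈ F, p.1 (x + (-ε) • (y - x)) ≤ p.2 := by
      have : Filter.Tendsto (fun ε : ℝ => -ε) (nhds 0) (nhds 0) := by
        simpa using (continuous_neg (G := ℝ)).tendsto 0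
      exact this.eventually hev
    obtain ⟨ε, ⟨h1, h2⟩, hε⟩ := (((hev.and hev2).filter_mono nhdsWithin_le_nhds).and
      (self_mem_nhdsWithin (s := Set.Ioi (0 : ℝ)))).exists
    have hε' : (0 : ℝ) < ε := hε
    have := hx.2 ((hmem _).2 h1) ((hmem _).2 h2)
      ⟨1 / 2, 1 / 2, by norm_num, by norm_num, by norm_num, by module⟩
    have h3 : ε • (y - x) = 0 := by simpa using this
    rcases smul_eq_zero.1 h3 with h4 | h4
    · exact hε'.ne' h4
    · exact hne (sub_eq_zero.1 h4).symm
  have hfin : (P.extremePoints ℝ).Finite := by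
    refine Set.Finite.of_finite_image ?_ hinj
    refine (F.powerset.finite_toSet).subset ?_
    rintro _ ⟨x, _, rfl⟩
    exact Finset.mem_coe.2 (Finset.mem_powerset.2 (Finset.filter_subset _ _))
  refine ⟨hfin.toFinset, ?_⟩
  rw [Set.Finite.coe_toFinset]
  exact (closure_convexHull_extremePoints hc hconv).symm.trans
    (hfin.isClosed_convexHull ℝ).closure_eq

lemma VP.inter_hp {P Q : Set V} (h : VP P) (h0 : (0 : V) ∈ P) (hQ : HP Q) : VP (P ∩ Q) := by
  have hc : IsClosed Q := by
    obtain ⟨F, rfl⟩ := hQ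
    have : {x : V | ∀ p ∈ F, p.1 x ≤ p.2} = ⋂ p ∈ F, {x | p.1 x ≤ p.2} := by
      ext; simp
    rw [this]
    exact isClosed_biInter fun p _ =>
      isClosed_le (LinearMap.continuous_of_finiteDimensional p.1) continuous_const
  exact ((h.hp h0).inter hQ).vp (h.isCompact.inter_right hc)

/-- The simplex spanned by the origin and a family of points. -/
def Sx {d : ℕ} (w : Fin d → V) : Set V := convexHull ℝ (insert 0 (Set.range w))

lemma Sx.vp {d : ℕ} (w : Fin d → V) : VP (Sx w) := by
  classical
  exact ⟨insert 0 (Finset.univ.image w), by simp [Sx]⟩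

lemma Sx.zero_mem {d : ℕ} (w : Fin d → V) : (0 : V) ∈ Sx w :=
  subset_convexHull ℝ _ (Set.mem_insert _ _)

lemma Sx.mem {d : ℕ} (w : Fin d → V) (i : Fin d) : w i ∈ Sx w :=
  subset_convexHull ℝ _ (Set.mem_insert_of_mem _ ⟨i, rfl⟩)

lemma Sx.subset {d : ℕ} (w : Fin d → V) {C : Set V} (hC : Convex ℝ C) (h0 : (0 : V) ∈ C)
    (h : ∀ i, w i ∈ C) : Sx w ⊆ C := by
  apply convexHull_min _ hC
  rw [Set.insert_subset_iff]
  refine ⟨h0, ?_⟩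
  rintro _ ⟨i, rfl⟩
  exact h i

lemma Sx.mem_iff {d : ℕ} (w : Fin d → V) (x : V) :
    x ∈ Sx w ↔ ∃ a : Fin d → ℝ, (∀ i, 0 ≤ a i) ∧ ∑ i, a i ≤ 1 ∧ x = ∑ i, a i • w i := by
  constructor
  · intro hx
    have : Sx w ⊆ {x | ∃ a : Fin d → ℝ, (∀ i, 0 ≤ a i) ∧ ∑ i, a i ≤ 1 ∧ x = ∑ i, a i • w i} := by
      apply Sx.subset
      · rintro _ ⟨a, ha, ha1, rfl⟩ _ ⟨b, hb, hb1, rfl⟩ s t hs ht hst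
        refine ⟨fun i => s * a i + t * b i, fun i => ?_, ?_, ?_⟩
        · have := ha i
          have := hb i
          positivity
        · rw [Finset.sum_add_distrib, ← Finset.mul_sum, ← Finset.mul_sum]
          nlinarith
        · simp only [add_smul, mul_smul, Finset.sum_add_distrib, Finset.smul_sum]
      · exact ⟨0, by simp, by simp, by simp⟩
      · intro i
        refine ⟨Pi.single i 1, fun j => ?_, ?_, ?_⟩
        · rw [Pi.single_apply]; split_ifs <;> simp
        · simp
        · simp [Pi.single_apply, ite_smul]
    exact this hx
  · rintro ⟨a, ha, ha1, rfl⟩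
    have hconv : Convex ℝ (Sx w) := (Sx.vp w).convex
    have := hconv.sum_mem (t := Finset.univ) (w := fun o : Option (Fin d) => o.elim (1 - ∑ i, a i) a)
      (z := fun o => o.elim 0 w) ?_ ?_ ?_
    · simpa [Fintype.sum_option] using this
    · rintro (_ | i) _
      · simpa using ha1
      · exact ha i
    · simp [Fintype.sum_option]
    · rintro (_ | i) _
      · exact Sx.zero_mem w
      · exact Sx.mem w i

/-- Polytopes containing the origin that can be dissected by linear hyperplanes into
simplices with a vertex at the origin. -/
inductive Dis (d : ℕ) : Set V → Prop
  | flat (P : Set V) (hP : VP P) (h0 : (0 : V) ∈ P) (h : V →ₗ[ℝ] ℝ) (hh : h ≠ 0)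
      (hk : ∀ x ∈ P, h x = 0) : Dis d P
  | simplex (w : Fin d → V) (hw : LinearIndependent ℝ w) : Dis d (Sx w)
  | cut (P : Set V) (hP : VP P) (h0 : (0 : V) ∈ P) (h : V →ₗ[ℝ] ℝ) (hh : h ≠ 0)
      (h1 : Dis d (P ∩ {x | 0 ≤ h x})) (h2 : Dis d (P ∩ {x | h x ≤ 0})) : Dis d P

lemma Sx.flat {d : ℕ} (hd : d = Module.finrank ℝ V) (w : Fin d → V)
    (hw : ¬ LinearIndependent ℝ w) :
    ∃ h : V →ₗ[ℝ] ℝ, h ≠ 0 ∧ ∀ x ∈ Sx w, h x = 0 := by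
  have hlt : Submodule.span ℝ (Set.range w) < ⊤ := by
    rw [lt_top_iff_ne_top]
    intro htop
    exact hw (linearIndependent_of_top_le_span_of_card_eq_finrank htop.ge (by simpa using hd))
  obtain ⟨f, hf, hle⟩ := Submodule.exists_le_ker_of_lt_top _ hlt
  refine ⟨f, hf, fun x hx => ?_⟩
  have : Sx w ⊆ (LinearMap.ker f : Set V) := Sx.subset w (Submodule.convex _) (Submodule.zero_mem _)
    (fun i => hle (Submodule.subset_span ⟨i, rfl⟩))
  exact this hx

lemma Sx.dis {d : ℕ} (hd : d = Module.finrank ℝ V) (w : Fin d → V) : Dis d (Sx w) := by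
  by_cases hw : LinearIndependent ℝ w
  · exact Dis.simplex w hw
  · obtain ⟨h, hh, hk⟩ := Sx.flat hd w hw
    exact Dis.flat _ (Sx.vp w) (Sx.zero_mem w) h hh hk

lemma sum_two {M : Type*} [AddCommGroup M] {d : ℕ} {a b : Fin d} (hab : a ≠ b) (g : Fin d → M) :
    ∑ i, g i = g a + (g b + ∑ i ∈ (Finset.univ.erase a).erase b, g i) := by
  rw [← Finset.add_sum_erase _ _ (Finset.mem_univ a), ← Finset.add_sum_erase _ _
    (Finset.mem_erase.2 ⟨hab.symm, Finset.mem_univ b⟩)]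

lemma Sx.split {d : ℕ} (w : Fin d → V) {a b : Fin d} (hab : a ≠ b)
    {s : ℝ} (hs0 : 0 < s) (hs1 : s < 1) (h : V →ₗ[ℝ] ℝ) (ha : h (w a) = 1 - s)
    (hb : h (w b) = -s) (ho : ∀ i, i ≠ a → i ≠ b → h (w i) = 0) :
    Sx w ∩ {x | 0 ≤ h x} = Sx (Function.update w b (s • w a + (1 - s) • w b)) := by
  set z := s • w a + (1 - s) • w b with hz
  have hzh : h z = 0 := by simp [hz, ha, hb]; ring
  apply subset_antisymm
  · rintro x ⟨hx, hx0⟩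
    obtain ⟨c, hc, hc1, rfl⟩ := (Sx.mem_iff w x).1 hx
    have h1s : 0 < 1 - s := by linarith
    have hval : 0 ≤ c a * (1 - s) - c b * s := by
      have h2 : h (∑ i, c i • w i) = c a * (1 - s) - c b * s := by
        rw [map_sum, sum_two hab, Finset.sum_eq_zero]
        · simp [ha, hb]; ring
        · intro i hi
          simp only [Finset.mem_erase] at hi
          simp [ho i hi.2.1 hi.1]
      rw [← h2]; exact hx0
    rw [Sx.mem_iff]
    refine ⟨fun i => if i = a then c a - s * (c b / (1 - s)) else
      if i = b then c b / (1 - s) else c i, ?_, ?_, ?_⟩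
    · intro i
      dsimp only
      split_ifs
      · rw [← mul_div_assoc, sub_nonneg, div_le_iff₀ h1s]; linarith
      · exact div_nonneg (hc b) h1s.le
      · exact hc i
    · rw [sum_two hab] at hc1 ⊢
      rw [Finset.sum_congr rfl (g := c)]
      · simp only [if_true, if_neg hab.symm]
        have : c b / (1 - s) * (1 - s) = c b := div_mul_cancel₀ _ h1s.ne'
        linarith
      · intro i hi
        simp only [Finset.mem_erase] at hi
        rw [if_neg hi.2.1, if_neg hi.1]
    · rw [sum_two hab, sum_two hab (fun i => _ • Function.update w b z i)]
      rw [← add_assoc, ← add_assoc]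
      congr 1
      · simp only [if_true, if_neg hab.symm, Function.update_self, Function.update_of_ne hab]
        rw [hz, smul_add, smul_smul, smul_smul, div_mul_cancel₀ _ h1s.ne', sub_smul, mul_comm s]
        abel
      · apply Finset.sum_congr rfl
        intro i hi
        simp only [Finset.mem_erase] at hi
        rw [if_neg hi.2.1, if_neg hi.1, Function.update_of_ne hi.1]
  · apply Sx.subset
    · exact (Sx.vp w).convex.inter (convex_halfSpace_ge h.isLinear 0)
    · exact ⟨Sx.zero_mem w, by simp⟩
    · intro i
      by_cases hi : i = b
      · subst hi
        rw [Function.update_self]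
        refine ⟨(Sx.vp w).convex (Sx.mem w a) (Sx.mem w i) hs0.le (by linarith) (by ring), ?_⟩
        exact hzh.ge
      · rw [Function.update_of_ne hi]
        refine ⟨Sx.mem w i, ?_⟩
        by_cases hia : i = a
        · subst hia
          simp only [Set.mem_ofPred_eq, ha]; linarith
        · exact (ho i hia hi).ge

lemma Sx.dis_half {d : ℕ} (hd : d = Module.finrank ℝ V) (f : V →ₗ[ℝ] ℝ) {β : ℝ} (hβ : 0 ≤ β) :
    ∀ (m : ℕ) (w : Fin d → V), (Finset.univ.filter (fun i => f (w i) ≠ β)).card = m →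
      Dis d (Sx w ∩ {x | f x ≤ β}) := by
  intro m
  induction m using Nat.strong_induction_on with
  | _ m ih =>
  intro w hm
  have hvp : VP (Sx w ∩ {x | f x ≤ β}) := (Sx.vp w).inter_hp (Sx.zero_mem w) (HP.half f β)
  have h0 : (0 : V) ∈ Sx w ∩ {x | f x ≤ β} := ⟨Sx.zero_mem w, by simpa using hβ⟩
  by_cases hw : LinearIndependent ℝ w
  swap
  · obtain ⟨h, hh, hk⟩ := Sx.flat hd w hw
    exact Dis.flat _ hvp h0 h hh (fun x hx => hk x hx.1)
  by_cases hle : ∀ i, f (w i) ≤ β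
  · have : Sx w ∩ {x | f x ≤ β} = Sx w := by
      apply Set.inter_eq_left.2
      exact Sx.subset w (convex_halfSpace_le f.isLinear β) (by simpa using hβ) hle
    rw [this]
    exact Sx.dis hd w
  push Not at hle
  obtain ⟨a, ha⟩ := hle
  by_cases hge : ∀ i, β ≤ f (w i)
  · rcases eq_or_lt_of_le hβ with rfl | hpos
    · refine Dis.flat _ hvp h0 f (fun h => by simp [h] at ha) ?_
      rintro x ⟨hx, hx0⟩
      refine le_antisymm hx0 ?_
      exact Sx.subset w (convex_halfSpace_ge f.isLinear 0) (by simp) hge hx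
    · have : Sx w ∩ {x | f x ≤ β} = Sx (fun i => (β / f (w i)) • w i) := by
        apply subset_antisymm
        · rintro x ⟨hx, hxβ⟩
          obtain ⟨c, hc, hc1, rfl⟩ := (Sx.mem_iff w x).1 hx
          have hxβ' : f (∑ i, c i • w i) ≤ β := hxβ
          rw [Sx.mem_iff]
          refine ⟨fun i => c i * f (w i) / β, fun i => ?_, ?_, ?_⟩
          · exact div_nonneg (mul_nonneg (hc i) (hβ.trans (hge i))) hβ
          · rw [← Finset.sum_div, div_le_one hpos]
            simpa using hxβ'
          · apply Finset.sum_congr rfl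
            intro i _
            have := (hpos.trans_le (hge i)).ne'
            rw [smul_smul]
            congr 1
            field_simp
        · apply Sx.subset
          · exact hvp.convex
          · exact h0
          · intro i
            have hfi := hpos.trans_le (hge i)
            constructor
            · have := (Sx.vp w).convex (Sx.mem w i) (Sx.zero_mem w) (a := β / f (w i))
                (b := 1 - β / f (w i)) (by positivity)
                (by rw [sub_nonneg, div_le_one hfi]; exact hge i) (by ring)
              simpa using this
            · simp [div_mul_cancel₀ _ hfi.ne']
      rw [this]
      exact Sx.dis hd _
  push Not at hge
  obtain ⟨b, hb⟩ := hge
  have hab : a ≠ b := by rintro rfl; linarith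
  -- cut through the point of the edge where `f = β`
  set s : ℝ := (β - f (w b)) / (f (w a) - f (w b)) with hs
  have hden : 0 < f (w a) - f (w b) := by linarith
  have hs0 : 0 < s := div_pos (by linarith) hden
  have hs1 : s < 1 := by rw [hs, div_lt_one hden]; linarith
  have hfz : f (s • w a + (1 - s) • w b) = β := by
    have : s * (f (w a) - f (w b)) = β - f (w b) := div_mul_cancel₀ _ hden.ne'
    simp; linarith
  let B := basisOfLinearIndependentOfCardEqFinrank' w hw (by simpa using hd)
  let h : V →ₗ[ℝ] ℝ := (1 - s) • B.coord a - s • B.coord b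
  have hB : ∀ i j, B.coord i (w j) = if j = i then 1 else 0 := by
    intro i j
    have : w j = B j := by simp [B]
    rw [this, Module.Basis.coord_apply, Module.Basis.repr_self, Finsupp.single_apply]
  have h_a : h (w a) = 1 - s := by simp [h, hB, hab]
  have h_b : h (w b) = -s := by simp [h, hB, hab.symm]
  have h_o : ∀ i, i ≠ a → i ≠ b → h (w i) = 0 := by
    intro i hia hib
    simp [h, hB, hia, hib]
  have hh : h ≠ 0 := by
    intro h0
    rw [h0] at h_b
    simp at h_b
    linarith
  have hcard : ∀ j, f (w j) ≠ β → (Finset.univ.filter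
      (fun i => f (Function.update w j (s • w a + (1 - s) • w b) i) ≠ β)).card < m := by
    intro j hj
    rw [← hm]
    apply Finset.card_lt_card
    rw [Finset.ssubset_iff_of_subset]
    · exact ⟨j, by simpa using hj, by simpa using hfz⟩
    · intro i hi
      simp only [Finset.mem_filter, Finset.mem_univ, true_and] at hi ⊢
      by_cases hij : i = j
      · subst hij; exact hj
      · rwa [Function.update_of_ne hij] at hi
  have e1 := Sx.split w hab hs0 hs1 h h_a h_b h_o
  have e2 := Sx.split w hab.symm (s := 1 - s) (by linarith) (by linarith) (-h)
    (by simp [h_b]) (by simp [h_a]) (fun i hib hia => by simp [h_o i hia hib])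
  have e2' : Sx w ∩ {x | h x ≤ 0} = Sx (Function.update w a (s • w a + (1 - s) • w b)) := by
    have : (1 - s) • w b + (1 - (1 - s)) • w a = s • w a + (1 - s) • w b := by
      rw [sub_sub_cancel, add_comm]
    rw [this] at e2
    rw [← e2]
    ext x
    simp
  refine Dis.cut _ hvp h0 h hh ?_ ?_
  · rw [Set.inter_right_comm, e1]
    exact ih _ (hcard b hb.ne) _ rfl
  · rw [Set.inter_right_comm, e2']
    exact ih _ (hcard a ha.ne') _ rfl

lemma Dis.half {d : ℕ} (hd : d = Module.finrank ℝ V) {P : Set V} (hP : Dis d P)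
    (f : V →ₗ[ℝ] ℝ) {β : ℝ} (hβ : 0 ≤ β) : Dis d (P ∩ {x | f x ≤ β}) := by
  induction hP with
  | flat P hP h0 h hh hk =>
    exact Dis.flat _ (hP.inter_hp h0 (HP.half f β)) ⟨h0, by simpa using hβ⟩ h hh
      (fun x hx => hk x hx.1)
  | simplex w hw => exact Sx.dis_half hd f hβ _ w rfl
  | cut P hP h0 h hh h1 h2 ih1 ih2 =>
    refine Dis.cut _ (hP.inter_hp h0 (HP.half f β)) ⟨h0, by simpa using hβ⟩ h hh ?_ ?_
    · rwa [Set.inter_right_comm]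
    · rwa [Set.inter_right_comm]

lemma Dis.inter_all {d : ℕ} (hd : d = Module.finrank ℝ V) {P : Set V} (hP : Dis d P)
    (F : Finset ((V →ₗ[ℝ] ℝ) × ℝ)) (hF : ∀ p ∈ F, 0 ≤ p.2) :
    Dis d (P ∩ {x | ∀ p ∈ F, p.1 x ≤ p.2}) := by
  classical
  induction F using Finset.induction_on with
  | empty => simpa using hP
  | insert p F _ ih =>
    have h1 := (ih (fun q hq => hF q (Finset.mem_insert_of_mem hq))).half hd p.1
      (hF p (Finset.mem_insert_self _ _))
    convert h1 using 1
    ext x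
    simp only [Set.mem_inter_iff, Set.mem_ofPred_eq, Finset.forall_mem_insert]
    tauto

lemma dis_of_vp {d : ℕ} (hd : d = Module.finrank ℝ V) (e : Module.Basis (Fin d) ℝ V)
    (s : Finset (Fin d)) : ∀ P : Set V, VP P → (0 : V) ∈ P →
      (∀ i, i ∉ s → (∀ x ∈ P, 0 ≤ e.coord i x) ∨ (∀ x ∈ P, e.coord i x ≤ 0)) → Dis d P := by
  classical
  induction s using Finset.induction_on with
  | empty =>
    intro P hP h0 hor
    have hsg : ∀ i, ∃ ε : ℝ, (ε = 1 ∨ ε = -1) ∧ ∀ x ∈ P, 0 ≤ ε * e.coord i x := by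
      intro i
      rcases hor i (by simp) with h | h
      · exact ⟨1, Or.inl rfl, fun x hx => by simpa using h x hx⟩
      · exact ⟨-1, Or.inr rfl, fun x hx => by simpa using h x hx⟩
    choose ε hε1 hε using hsg
    have hcont : Continuous (fun x : V => ∑ i, ε i * e.coord i x) :=
      continuous_finsetSum _ fun i _ =>
        continuous_const.mul (LinearMap.continuous_of_finiteDimensional (e.coord i))
    obtain ⟨R, hR⟩ := (hP.isCompact.image hcont).bddAbove
    have hR' : ∀ x ∈ P, ∑ i, ε i * e.coord i x ≤ R := fun x hx => hR ⟨x, hx, rfl⟩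
    set r := max R 1 with hr
    have hr0 : 0 < r := lt_max_of_lt_right one_pos
    obtain ⟨F, hF⟩ := hP.hp h0
    have hsub : P ⊆ Sx (fun i => (r * ε i) • e i) := by
      intro x hx
      rw [Sx.mem_iff]
      refine ⟨fun i => ε i * e.coord i x / r, fun i => div_nonneg (hε i x hx) hr0.le, ?_, ?_⟩
      · rw [← Finset.sum_div, div_le_one hr0]
        exact (hR' x hx).trans (le_max_left _ _)
      · conv_lhs => rw [← e.sum_repr x]
        apply Finset.sum_congr rfl
        intro i _
        rw [smul_smul]
        congr 1
        have : ε i * ε i = 1 := by rcases hε1 i with h | h <;> rw [h] <;> norm_num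
        simp only [Module.Basis.coord_apply]
        field_simp
        linear_combination (-(e.repr x i)) * this
    have key := (Sx.dis hd (fun i => (r * ε i) • e i)).inter_all hd F (by
      rw [hF] at h0
      intro p hp
      simpa using h0 p hp)
    rw [← hF, Set.inter_eq_right.2 hsub] at key
    exact key
  | insert i s _ ih =>
    intro P hP h0 hor
    have hi : e.coord i ≠ 0 := by
      intro h
      have := LinearMap.congr_fun h (e i)
      simp at this
    refine Dis.cut P hP h0 (e.coord i) hi ?_ ?_
    · refine ih _ (hP.inter_hp h0 (HP.half' _ _)) ⟨h0, by simp⟩ ?_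
      intro j hj
      by_cases hji : j = i
      · subst hji
        exact Or.inl fun x hx => hx.2
      · rcases hor j (by simp [hj, hji]) with h | h
        · exact Or.inl fun x hx => h x hx.1
        · exact Or.inr fun x hx => h x hx.1
    · refine ih _ (hP.inter_hp h0 (HP.half _ _)) ⟨h0, by simp⟩ ?_
      intro j hj
      by_cases hji : j = i
      · subst hji
        exact Or.inr fun x hx => hx.2
      · rcases hor j (by simp [hj, hji]) with h | h
        · exact Or.inl fun x hx => h x hx.1
        · exact Or.inr fun x hx => h x hx.1

/-- A simple functional, additive under cuts by linear hyperplanes and vanishing on simplices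
with a vertex at the origin, vanishes. -/
lemma main_abstract {M : Type*} [AddCommGroup M] {d : ℕ} (hd : d = Module.finrank ℝ V)
    (c : Set V → M)
    (hcut : ∀ P : Set V, VP P → (0 : V) ∈ P → ∀ h : V →ₗ[ℝ] ℝ, h ≠ 0 →
      c (P ∩ {x | 0 ≤ h x}) = 0 → c (P ∩ {x | h x ≤ 0}) = 0 → c P = 0)
    (hflat : ∀ P : Set V, VP P → (0 : V) ∈ P → ∀ h : V →ₗ[ℝ] ℝ, h ≠ 0 →
      (∀ x ∈ P, h x = 0) → c P = 0)
    (hsimp : ∀ w : Fin d → V, LinearIndependent ℝ w → c (Sx w) = 0)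
    (P : Set V) (hP : VP P) (h0 : (0 : V) ∈ P) : c P = 0 := by
  have e : Module.Basis (Fin d) ℝ V := Module.finBasisOfFinrankEq ℝ V hd.symm
  have hD : Dis d P := dis_of_vp hd e Finset.univ P hP h0 (fun i hi => by simp at hi)
  clear hP h0
  induction hD with
  | flat P hP h0 h hh hk => exact hflat P hP h0 h hh hk
  | simplex w hw => exact hsimp w hw
  | cut P hP h0 h hh h1 h2 ih1 ih2 => exact hcut P hP h0 h hh ih1 ih2

lemma Sx.image {V' : Type*} [NormedAddCommGroup V'] [NormedSpace ℝ V'] {d : ℕ} (w : Fin d → V)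
    (g : V →ₗ[ℝ] V') : g '' Sx w = Sx (fun i => g (w i)) := by
  unfold Sx
  rw [LinearMap.image_convexHull, Set.image_insert_eq, map_zero, ← Set.range_comp]
  rfl

lemma VP.image {V' : Type*} [NormedAddCommGroup V'] [NormedSpace ℝ V'] {P : Set V} (h : VP P)
    (g : V →ₗ[ℝ] V') : VP (g '' P) := by
  classical
  obtain ⟨S, rfl⟩ := h
  exact ⟨S.image g, by rw [LinearMap.image_convexHull, Finset.coe_image]⟩

lemma VP.isPolytope {n : ℕ} {P : Set (E n)} (h : VP P) (h0 : (0 : E n) ∈ P) : IsPolytope P := by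
  obtain ⟨S, rfl⟩ := h
  refine ⟨S, ?_, rfl⟩
  have : (convexHull ℝ (S : Set (E n))).Nonempty := ⟨0, h0⟩
  simpa using this

lemma inner_act {n : ℕ} (M : Matrix (Fin n) (Fin n) ℝ) (hM : M.det = 1) (z x : E n) :
    ⟪act (invT M) z, act M x⟫ = ⟪z, x⟫ := by
  have h1 : act (invT M) = LinearMap.adjoint (act M⁻¹) := by
    unfold act invT
    rw [← Matrix.toEuclideanLin_conjTranspose_eq_adjoint, Matrix.conjTranspose_eq_transpose_of_trivial]
  rw [h1, LinearMap.adjoint_inner_left]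
  congr 1
  unfold act
  rw [Matrix.toEuclideanLin_apply, Matrix.toEuclideanLin_apply]
  simp [Matrix.mulVec_mulVec, Matrix.nonsing_inv_mul M (by rw [hM]; exact isUnit_one)]

lemma inner_inv {n : ℕ} {Z : Set (E n) → E n}
    (hcontra : ∀ (φ : Matrix.SpecialLinearGroup (Fin n) ℝ) (P : Set (E n)),
      IsPolytope P → (0 : E n) ∈ P →
      Z (act (φ : Matrix (Fin n) (Fin n) ℝ) '' P)
        = act (invT (φ : Matrix (Fin n) (Fin n) ℝ)) (Z P))
    (g : E n →ₗ[ℝ] E n) (hg : LinearMap.det g = 1) (P : Set (E n)) (hP : IsPolytope P)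
    (h0 : (0 : E n) ∈ P) (hgP : g '' P = P) (x : E n) : ⟪Z P, g x⟫ = ⟪Z P, x⟫ := by
  set M : Matrix (Fin n) (Fin n) ℝ := Matrix.toEuclideanLin.symm g with hMdef
  have hMg : act M = g := by simp [act, hMdef]
  have hdet : M.det = 1 := by
    rw [← hg, ← hMg]
    exact (LinearMap.det_toLin (PiLp.basisFun 2 ℝ (Fin n)) M).symm
  have h := hcontra ⟨M, hdet⟩ P hP h0
  simp only at h
  have h2 := inner_act M hdet (Z P) x
  rw [← h, hMg, hgP] at h2
  exact h2

lemma inner_flat {n : ℕ} {Z : Set (E n) → E n}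
    (hcontra : ∀ (φ : Matrix.SpecialLinearGroup (Fin n) ℝ) (P : Set (E n)),
      IsPolytope P → (0 : E n) ∈ P →
      Z (act (φ : Matrix (Fin n) (Fin n) ℝ) '' P)
        = act (invT (φ : Matrix (Fin n) (Fin n) ℝ)) (Z P))
    (u : E n) (hu : u ≠ 0) (P : Set (E n)) (hP : IsPolytope P)
    (h0 : (0 : E n) ∈ P) (hPu : ∀ x ∈ P, ⟪u, x⟫ = 0) (w : E n) (hw : ⟪u, w⟫ = 0) :
    ⟪Z P, w⟫ = 0 := by
  let f : E n →ₗ[ℝ] ℝ := (innerSL ℝ u).toLinearMap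
  have hf : ∀ x, f x = ⟪u, x⟫ := fun x => rfl
  have key := inner_inv hcontra (LinearMap.transvection f w)
    (by rw [LinearMap.transvection.det, hf, hw, add_zero]) P hP h0 (by
      have : Set.EqOn (LinearMap.transvection f w) id P := by
        intro x hx
        simp [LinearMap.transvection.apply, hf, hPu x hx]
      rw [this.image_eq, Set.image_id]) u
  rw [LinearMap.transvection.apply, inner_add_right, inner_smul_right, hf] at key
  have huu : ⟪u, u⟫ ≠ 0 := inner_self_ne_zero.2 hu
  have : ⟪u, u⟫ * ⟪Z P, w⟫ = 0 := by linarith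
  exact (mul_eq_zero.1 this).resolve_left huu

lemma zero_of_inner {n : ℕ} {Z : Set (E n) → E n}
    (hcontra : ∀ (φ : Matrix.SpecialLinearGroup (Fin n) ℝ) (P : Set (E n)),
      IsPolytope P → (0 : E n) ∈ P →
      Z (act (φ : Matrix (Fin n) (Fin n) ℝ) '' P)
        = act (invT (φ : Matrix (Fin n) (Fin n) ℝ)) (Z P))
    (u : E n) (hu : u ≠ 0) (P : Set (E n)) (hP : IsPolytope P)
    (h0 : (0 : E n) ∈ P) (hPu : ∀ x ∈ P, ⟪u, x⟫ = 0) (hZ : ⟪Z P, u⟫ = 0) : Z P = 0 := by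
  have huu : ⟪u, u⟫ ≠ 0 := inner_self_ne_zero.2 hu
  have h : ∀ x, ⟪Z P, x⟫ = 0 := by
    intro x
    have := inner_flat hcontra u hu P hP h0 hPu (x - (⟪u, x⟫ / ⟪u, u⟫) • u) (by
      rw [inner_sub_right, inner_smul_right, div_mul_cancel₀ _ huu, sub_self])
    rw [inner_sub_right, inner_smul_right, hZ] at this
    linarith
  exact inner_self_eq_zero.1 (h (Z P))

set_option maxHeartbeats 1000000 in
lemma zero_of_simplex {n : ℕ} {Z : Set (E n) → E n}
    (hcontra : ∀ (φ : Matrix.SpecialLinearGroup (Fin n) ℝ) (P : Set (E n)),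
      IsPolytope P → (0 : E n) ∈ P →
      Z (act (φ : Matrix (Fin n) (Fin n) ℝ) '' P)
        = act (invT (φ : Matrix (Fin n) (Fin n) ℝ)) (Z P))
    (hn : 3 ≤ n) (u : E n) (hu : u ≠ 0) (W : Submodule ℝ (E n))
    (hW : W = (Submodule.span ℝ {u})ᗮ) (hfr : n - 1 = Module.finrank ℝ W)
    (w : Fin (n - 1) → W) (hw : LinearIndependent ℝ w) :
    Z (W.subtype '' Sx w) = 0 := by
  have huW : ∀ x : W, ⟪u, (x : E n)⟫ = 0 := fun x =>
    Submodule.mem_orthogonal_singleton_iff_inner_right.1 (hW ▸ x.2)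
  have huu : ⟪u, u⟫ ≠ 0 := inner_self_ne_zero.2 hu
  let a : Fin (n - 1) := ⟨0, by omega⟩
  let b : Fin (n - 1) := ⟨1, by omega⟩
  have hab : a ≠ b := by simp [a, b]
  let B := basisOfLinearIndependentOfCardEqFinrank' w hw (by simpa using hfr)
  have hB : ∀ i j, B.coord i (w j) = if j = i then 1 else 0 := by
    intro i j
    have : w j = B j := by simp [B]
    rw [this, Module.Basis.coord_apply, Module.Basis.repr_self, Finsupp.single_apply]
  let f1 : E n →ₗ[ℝ] ℝ := (B.coord a - B.coord b) ∘ₗ W.orthogonalProjectionOnto.toLinearMap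
  let f2 : E n →ₗ[ℝ] ℝ := (-(2 / ⟪u, u⟫)) • (innerSL ℝ u).toLinearMap
  have hf1 : ∀ x : W, f1 x = B.coord a x - B.coord b x := by
    intro x
    simp [f1]
  have hf1u : f1 u = 0 := by
    have : W.orthogonalProjectionOnto u = 0 := by
      apply Submodule.orthogonalProjection_mem_subspace_orthogonalComplement_eq_zero
      rw [hW]
      exact Submodule.le_orthogonal_orthogonal _ (Submodule.mem_span_singleton_self u)
    simp [f1, this]
  have hf2 : ∀ x : W, f2 x = 0 := by
    intro x
    have := huW x
    simp [f2, this]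
  have hf2u : f2 u = -2 := by
    have : f2 u = (-(2 / ⟪u, u⟫)) * ⟪u, u⟫ := rfl
    rw [this, neg_mul, div_mul_cancel₀ _ huu]
  let v : E n := (w b : E n) - (w a : E n)
  have hf1v : f1 v = -2 := by
    simp only [v, map_sub, hf1, hB]
    simp [hab, hab.symm]
    norm_num
  let g := LinearMap.transvection f1 v ∘ₗ LinearMap.transvection f2 u
  have hg : LinearMap.det g = 1 := by
    simp only [g, LinearMap.det_comp, LinearMap.transvection.det, hf1v, hf2u]
    norm_num
  have hgW : ∀ i, g (w i) = w (Equiv.swap a b i) := by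
    intro i
    simp only [g, LinearMap.comp_apply, LinearMap.transvection.apply, hf2, zero_smul, add_zero, hf1,
      hB]
    by_cases hia : i = a
    · subst hia
      simp [hab, v]
    by_cases hib : i = b
    · subst hib
      simp [hab.symm, v]
    · simp [hia, hib, Equiv.swap_apply_of_ne_of_ne hia hib]
  have hgu : g u = -u := by
    simp only [g, LinearMap.comp_apply, LinearMap.transvection.apply, hf2u, map_add, map_smul, hf1u]
    simp
    module
  rw [Sx.image]
  set P := Sx (fun i => W.subtype (w i)) with hPdef
  have h0 : (0 : E n) ∈ P := Sx.zero_mem _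
  have hP : IsPolytope P := (Sx.vp _).isPolytope h0
  have hgP : g '' P = P := by
    rw [hPdef, Sx.image]
    unfold Sx
    congr 2
    simp only [Submodule.subtype_apply, hgW]
    exact (Equiv.swap a b).surjective.range_comp (fun i => (w i : E n))
  have hPu : ∀ x ∈ P, ⟪u, x⟫ = 0 := by
    intro x hx
    have : P ⊆ (W : Set (E n)) := Sx.subset _ (Submodule.convex _) (Submodule.zero_mem _)
      (fun i => (w i).2)
    exact huW ⟨x, this hx⟩
  have hinv := inner_inv hcontra g hg P hP h0 hgP u
  rw [hgu, inner_neg_right] at hinv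
  exact zero_of_inner hcontra u hu P hP h0 hPu (by linarith)

end CV

/-- for `n ≥ 3`, every SL(n) contravariant valuation on polytopes
containing the origin is simple. -/
theorem contravariant_valuation_simple {n : ℕ} (hn : 3 ≤ n) (Z : Set (E n) → E n)
    (hval : ∀ P Q : Set (E n), IsPolytope P → IsPolytope Q →
      IsPolytope (P ∪ Q) → IsPolytope (P ∩ Q) → (0 : E n) ∈ P → (0 : E n) ∈ Q →
      Z P + Z Q = Z (P ∪ Q) + Z (P ∩ Q))
    (hcontra : ∀ (φ : Matrix.SpecialLinearGroup (Fin n) ℝ) (P : Set (E n)),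
      IsPolytope P → (0 : E n) ∈ P →
      Z (act (φ : Matrix (Fin n) (Fin n) ℝ) '' P)
        = act (invT (φ : Matrix (Fin n) (Fin n) ℝ)) (Z P)) :
    ∀ P : Set (E n), IsPolytope P → (0 : E n) ∈ P → polyDim P ≤ n - 1 → Z P = 0 := by
  intro P hP h0 hdim
  obtain ⟨S, hS, hPS⟩ := hP
  -- a nonzero normal vector of a linear hyperplane containing `P`
  have hspan : Submodule.span ℝ P < ⊤ := by
    have hdir : (affineSpan ℝ P).direction = Submodule.span ℝ P := by
      rw [direction_affineSpan]
      apply le_antisymm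
      · rw [vectorSpan_def, Submodule.span_le]
        rintro _ ⟨x, hx, y, hy, rfl⟩
        exact Submodule.sub_mem _ (Submodule.subset_span hx) (Submodule.subset_span hy)
      · rw [Submodule.span_le]
        intro x hx
        have := vsub_mem_vectorSpan ℝ hx h0
        simpa using this
    apply Submodule.lt_top_of_finrank_lt_finrank
    rw [← hdir, finrank_euclideanSpace_fin]
    unfold polyDim at hdim
    omega
  obtain ⟨f, hf, hle⟩ := Submodule.exists_le_ker_of_lt_top _ hspan
  set u : E n := (InnerProductSpace.toDual ℝ (E n)).symm (LinearMap.toContinuousLinearMap f) with hudef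
  have hfu : ∀ x, ⟪u, x⟫ = f x := by
    intro x
    rw [hudef, InnerProductSpace.toDual_symm_apply]
    rfl
  have hu : u ≠ 0 := by
    intro h
    apply hf
    ext x
    simp [← hfu, h]
  set W := (Submodule.span ℝ {u})ᗮ with hW
  have huW : ∀ x : W, ⟪u, (x : E n)⟫ = 0 := fun x =>
    Submodule.mem_orthogonal_singleton_iff_inner_right.1 x.2
  have hfr : n - 1 = Module.finrank ℝ W := by
    have h1 := Submodule.finrank_add_finrank_orthogonal (Submodule.span ℝ {u})
    rw [finrank_span_singleton hu, finrank_euclideanSpace_fin] at h1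
    rw [hW]
    omega
  have hPW : P ⊆ W := by
    intro x hx
    rw [hW]
    refine Submodule.mem_orthogonal_singleton_iff_inner_right.2 ?_
    rw [hfu]
    exact hle (Submodule.subset_span hx)
  have himg : W.subtype '' (W.subtype ⁻¹' P) = P := by
    rw [Set.image_preimage_eq_iff]
    intro x hx
    exact ⟨⟨x, hPW hx⟩, rfl⟩
  have hinj : Function.Injective W.subtype := Subtype.val_injective
  have hflat : ∀ Q : Set W, CV.VP Q → (0 : W) ∈ Q → ∀ h : W →ₗ[ℝ] ℝ, h ≠ 0 →
      (∀ x ∈ Q, h x = 0) → Z (W.subtype '' Q) = 0 := by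
    intro Q hQ hQ0 h hh hk
    have hI0 : (0 : E n) ∈ W.subtype '' Q := ⟨0, hQ0, rfl⟩
    have hI : IsPolytope (W.subtype '' Q) := (hQ.image _).isPolytope hI0
    set v : W := (InnerProductSpace.toDual ℝ W).symm (LinearMap.toContinuousLinearMap h) with hv
    have hhv : ∀ x, ⟪v, x⟫ = h x := by
      intro x
      rw [hv, InnerProductSpace.toDual_symm_apply]
      rfl
    have hv0 : v ≠ 0 := by
      intro h'
      apply hh
      ext x
      simp [← hhv, h']
    refine CV.zero_of_inner hcontra u hu _ hI hI0 ?_ ?_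
    · rintro _ ⟨x, _, rfl⟩
      exact huW x
    · refine CV.inner_flat hcontra (v : E n) (by simpa using hv0) _ hI hI0 ?_ u ?_
      · rintro _ ⟨x, hx, rfl⟩
        exact (hhv x).trans (hk x hx)
      · rw [real_inner_comm]
        exact huW v
  have key := CV.main_abstract hfr (fun Q => Z (W.subtype '' Q)) ?_ hflat
    (CV.zero_of_simplex hcontra hn u hu W hW hfr) (W.subtype ⁻¹' P) ?_ h0
  · simp only [himg] at key
    exact key
  · intro Q hQ hQ0 h hh h1 h2
    have hA := hQ.inter_hp hQ0 (CV.HP.half' h 0)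
    have hB := hQ.inter_hp hQ0 (CV.HP.half h 0)
    have hA0 : (0 : W) ∈ Q ∩ {x | 0 ≤ h x} := ⟨hQ0, by simp⟩
    have hB0 : (0 : W) ∈ Q ∩ {x | h x ≤ 0} := ⟨hQ0, by simp⟩
    have hC := hA.inter_hp hA0 (CV.HP.half h 0)
    have hint : (Q ∩ {x | 0 ≤ h x}) ∩ (Q ∩ {x | h x ≤ 0}) = (Q ∩ {x | 0 ≤ h x}) ∩ {x | h x ≤ 0} := by
      ext x
      simp only [Set.mem_inter_iff]
      tauto
    have huni : (Q ∩ {x | 0 ≤ h x}) ∪ (Q ∩ {x | h x ≤ 0}) = Q := by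
      rw [← Set.inter_union_distrib_left]
      apply Set.inter_eq_left.2
      intro x _
      exact le_total 0 (h x)
    have hC0 : (0 : W) ∈ (Q ∩ {x | 0 ≤ h x}) ∩ {x | h x ≤ 0} := ⟨hA0, by simp⟩
    have mem0 : ∀ R : Set W, (0 : W) ∈ R → (0 : E n) ∈ W.subtype '' R := fun R hR => ⟨0, hR, rfl⟩
    have pol : ∀ R : Set W, CV.VP R → (0 : W) ∈ R → IsPolytope (W.subtype '' R) :=
      fun R hR hR0 => (hR.image _).isPolytope (mem0 R hR0)
    have hv := hval (W.subtype '' (Q ∩ {x | 0 ≤ h x})) (W.subtype '' (Q ∩ {x | h x ≤ 0}))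
      (pol _ hA hA0) (pol _ hB hB0)
      (by rw [← Set.image_union, huni]; exact pol _ hQ hQ0)
      (by rw [← Set.image_inter hinj, hint]; exact pol _ hC hC0) (mem0 _ hA0) (mem0 _ hB0)
    rw [← Set.image_union, huni, ← Set.image_inter hinj, hint, h1, h2,
      hflat _ hC hC0 h hh (fun x hx => le_antisymm hx.2 hx.1.2)] at hv
    simpa using hv.symm
  · have hfinal : W.subtype ⁻¹' P = W.orthogonalProjectionOnto.toLinearMap '' P := by
      ext x
      constructor
      · intro hx
        exact ⟨x, hx, by simp⟩
      · rintro ⟨y, hy, rfl⟩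
        have : ((W.orthogonalProjectionOnto y : W) : E n) = y :=
          Submodule.starProjection_eq_self_iff.2 (hPW hy)
        simpa [this] using hy
    rw [hfinal]
    exact CV.VP.image ⟨S, hPS⟩ _
end
end
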